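/- Let q = p^f be a power of a prime p, let d ≥ 0 and k > 0, and suppose U_d(k) is nonempty. Let M = (M_0,…,M_d) be the modest element of U_d(k), i.e. the element whose reversed tuple (M_d, M_{d-1},…,M_0) is lexicographically greatest. Then for every other tuple (m_0,…,m_d) ∈ U_d(k) one has d·m_0 + (d-1)·m_1 + … + m_{d-1} > d·M_0 + (d-1)·M_1 + … + M_{d-1}, and consequently the t-adic valuation of S_d(-k) = Σ_{a monic of degree d in F_q[t]} a^k equals d·M_0 + (d-1)·M_1 + … + M_{d-1}. -/

import Mathlib

/-!
# The modest element minimises the weight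

*Reformulation.* A tuple of `U_d(k)` distributes the base-`p` digits of `k` (the atoms: `p ^ h`,
as many times as the `h`-th digit of `k` says) among the bins `0, …, d`, and its weight is the sum
over `j < d` of the cuts `m_0 + ⋯ + m_j`. Divisibility by `q - 1 = p ^ f - 1` sees only the type of
a bin, i.e. its number of atoms in every class `h mod f`. A nonnegative type is admissible for bin
`b` exactly when it is `ρ_b l + p * w (l + 1) - w l` for some carry vector `w ≥ 0` on `ZMod f`; here
`ρ_b = p - 1` for `b ≥ 1` (such a bin is a positive multiple of `q - 1`), and `ρ_0` comes from the
residue of `k`. For given types all cuts are simultaneously cheapest when the atoms of each class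
are handed out lowest first (`segVal_le_of_digits`, `exists_isU_of_valid`). The problem thus becomes
one about families of carry vectors.

*Exchange.* Fix a level `h`. If carry vectors can be changed so that the last cut loses an atom at
level `≥ h` while everything gained lies below level `h`, the total cost drops, because the
digits below level `h` together are worth less than `p ^ h` (`Improves.cost_lt`).
A family of minimal cost therefore admits no such exchange. Explicit exchanges are built by
lowering the carry vectors along a path of classes, each class owned by one bin
(`exists_improves_of_path`). They show, for a family of minimal cost, that
* the carry vectors of the bins `0, …, d - 1` all vanish at a common class
  (`MinCost.exists_zero`, used in an induction on `d`);
* consequently its last cut `m_0 + ⋯ + m_{d-1}` is the smallest possible (`MinCost.segVal_le`).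

So a tuple of minimal weight has the largest possible `m_d`. Removing the last entry preserves
minimality (`IsMin.restrict`), and induction shows that a tuple of minimal weight is the modest one
(`IsMin.lex`); in particular it is unique.

*Power sums.* Summing over the constant term gives
`S_{d+1}(-k) = - ∑ C(k, j) t ^ j S_d(-j)`, the sum being over `j < k` with `(q - 1) ∣ k - j`
(`powerSum_succ`). By Lucas' theorem `C(k, j) ≠ 0` in `F` iff `j + (k - j)` has no carry, so the
exponents occurring in `S_d(-k)` are weights of elements of `U_d(k)`, and a weight attained exactly
once does occur. The smallest weight is attained once, hence it is the `t`-adic valuation.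
-/

open Polynomial

open scoped Classical

/-- The monic polynomial `X^d + c_{d-1} X^{d-1} + ... + c_0` determined by its lower
coefficients `c : Fin d → F`; these parametrize the monic polynomials of degree `d`. -/
noncomputable def monicPoly (F : Type) [Field F] (d : ℕ) (c : Fin d → F) : F[X] :=
  X ^ d + ∑ i : Fin d, C (c i) * X ^ (i : ℕ)

/-- `S_d(-k) = Σ_{a monic of degree d} a^k`. -/
noncomputable def powerSum (F : Type) [Field F] [Fintype F] (d k : ℕ) : F[X] :=
  ∑ c : Fin d → F, monicPoly F d c ^ k

/-- `S̃_d(-k) = Σ_{a monic of degree d, v ∤ a} a^k`. -/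
noncomputable def rPowerSum (F : Type) [Field F] [Fintype F] (v : F[X]) (d k : ℕ) : F[X] :=
  ∑ c : Fin d → F, if v ∣ monicPoly F d c then 0 else monicPoly F d c ^ k

/-- `∑ i, m i = k` with no carrying of base-`p` digits. -/
def NoCarry (p : ℕ) {n : ℕ} (m : Fin n → ℕ) (k : ℕ) : Prop :=
  (∑ i, m i = k) ∧
    ∀ j : ℕ, (∑ i, (Nat.digits p (m i)).getD j 0) = (Nat.digits p k).getD j 0

/-- `U_d(k)`. -/
def Uset (p q d k : ℕ) : Set (Fin (d + 1) → ℕ) :=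
  {m | NoCarry p m k ∧ ∀ i : Fin (d + 1), 0 < (i : ℕ) → 0 < m i ∧ (q - 1) ∣ m i}

/-- `V_d(k)`. -/
def Vset (p q d k : ℕ) : Set (Fin (d + 1) → ℕ) :=
  {m | m ∈ Uset p q d k ∧ 0 < m 0}

/-- `W_d(k)`, the index set for the restricted power sum at `v = t`. -/
def Wset (p q d k : ℕ) : Set (Fin (d + 1) → ℕ) :=
  {m | NoCarry p m k ∧
      (∀ i : Fin (d + 1), 0 < (i : ℕ) → (i : ℕ) < d → 0 < m i ∧ (q - 1) ∣ m i) ∧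
      (q - 1) ∣ m (Fin.last d)}

/-- the weight `d·m_0 + (d-1)·m_1 + ⋯ + 1·m_{d-1}`. -/
def wt {d : ℕ} (m : Fin (d + 1) → ℕ) : ℕ := ∑ i : Fin (d + 1), (d - (i : ℕ)) * m i

/-- `L_k = min_{0 ≤ i ≤ f-1} l(k·p^i)/(q-1)` where `l` is the base-`q` digit sum. -/
noncomputable def Lval (q p f k : ℕ) : ℚ :=
  (Finset.Icc 0 (f - 1)).inf' ⟨0, by simp⟩
    (fun i => ((Nat.digits q (k * p ^ i)).sum : ℚ) / ((q : ℚ) - 1))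

/-- the `v`-adic multiple zeta value at negative integers `s_1, …, s_r`. -/
noncomputable def zetaV (F : Type) [Field F] [Fintype F] (v : F[X]) {r : ℕ}
    (s : Fin r → ℤ) : F[X] :=
  ∑ᶠ d ∈ {d : Fin r → ℕ | StrictAnti d}, ∏ i, rPowerSum F v (d i) (-(s i)).toNat

/-- the multiple zeta value at negative integers `s_1, …, s_r`. -/
noncomputable def zetaMZV (F : Type) [Field F] [Fintype F] {r : ℕ} (s : Fin r → ℤ) : F[X] :=
  ∑ᶠ d ∈ {d : Fin r → ℕ | StrictAnti d}, ∏ i, powerSum F (d i) (-(s i)).toNat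

/-- the trivial-zero condition for a prime of degree `e`. -/
def TrivialZeroCond (q p f : ℕ) {r : ℕ} (s : Fin r → ℤ) (e : ℕ) : Prop :=
  (∃ i : Fin r, s i < 0 ∧
      Lval q p f (-(s i)).toNat + (e : ℚ) < ((r - 1 - (i : ℕ) : ℕ) : ℚ)) ∨
  (∃ i j : Fin r, j < i ∧ s i < 0 ∧ s j < 0 ∧
      (r - 1 - (i : ℕ) : ℕ) < e ∧
      Lval q p f (-(s i)).toNat < ((r - 1 - (i : ℕ) : ℕ) : ℚ) ∧
      Lval q p f (-(s j)).toNat < (((i : ℕ) - (j : ℕ) : ℕ) : ℚ))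

/-! ### Closing and releasing carries on the circle -/

namespace ModestWeight

variable {f : ℕ} [NeZero f]

theorem circle_induction {P : ZMod f → Prop} (c : ZMod f) (h0 : P c)
    (hs : ∀ l, P l → P (l + 1)) (l : ZMod f) : P l := by
  have key : ∀ n : ℕ, P (c + n) := by
    intro n
    induction n with
    | zero => simpa using h0
    | succ n ih =>
      have := hs _ ih
      rwa [show c + ((n + 1 : ℕ) : ZMod f) = c + n + 1 by push_cast; ring]
  have := key (l - c).val
  rwa [ZMod.natCast_zmod_val, add_sub_cancel] at this

theorem exists_min_sum {P : (ZMod f → ℤ) → Prop} {D₀ : ZMod f → ℤ} (h0 : P D₀)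
    (μ : (ZMod f → ℤ) → ℕ) : ∃ D, P D ∧ ∀ D', P D' → μ D ≤ μ D' := by
  obtain ⟨D, hD, hm⟩ := (measure μ).wf.has_min {D | P D} ⟨D₀, h0⟩
  exact ⟨D, hD, fun E hE => not_lt.mp (hm E hE)⟩

/-- The type of a bin with base type `ρ` and carry vector `w`: the number of its digits whose
position is congruent to `l` modulo `f`. -/
def binType (p : ℤ) (ρ w : ZMod f → ℤ) (l : ZMod f) : ℤ := ρ l + p * w (l + 1) - w l

/-- A minimal vector `D ≤ w` with `D ≥ 1` on `J` that can be subtracted from `w` keeping the bin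
type nonnegative. By minimality, `D l` is nonzero only if it is `1` because of `J`, or if it is
forced by the type at `l`, which is then used up completely. -/
theorem exists_closure {p : ℤ} (hp : 2 ≤ p) {ρ w : ZMod f → ℤ} (hw : ∀ l, 0 ≤ w l)
    (hρ : ∀ l, 0 ≤ ρ l) (J : ZMod f → Prop) (hJ : ∀ l, J l → 1 ≤ w l) :
    ∃ D : ZMod f → ℤ, ∀ l, 0 ≤ D l ∧ D l ≤ w l ∧ (J l → 1 ≤ D l) ∧
      0 ≤ binType p ρ w l + D l - p * D (l + 1) ∧
      (D l ≤ 0 ∨ (J l ∧ D l ≤ 1) ∨ D l ≤ p * D (l + 1) - binType p ρ w l) := by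
  obtain ⟨D, hD, hmin⟩ := exists_min_sum
    (P := fun D => ∀ l, 0 ≤ D l ∧ D l ≤ w l ∧ (J l → 1 ≤ D l) ∧
      0 ≤ binType p ρ w l + D l - p * D (l + 1)) (D₀ := w)
    (fun l => ⟨hw l, le_rfl, hJ l, by have := hρ l; simp only [binType]; linarith⟩)
    (fun D => (∑ l, D l).toNat)
  refine ⟨D, fun l => ⟨(hD l).1, (hD l).2.1, (hD l).2.2.1, (hD l).2.2.2, ?_⟩⟩
  by_contra! hcon
  obtain ⟨h1, h2, h3⟩ := hcon
  have := hmin (Function.update D l (D l - 1)) (by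
    intro i
    by_cases hi : i = l
    · subst hi
      have hle : Function.update D i (D i - 1) (i + 1) ≤ D (i + 1) := by
        by_cases h : i + 1 = i
        · rw [h]; simp
        · rw [Function.update_of_ne h]
      have : p * Function.update D i (D i - 1) (i + 1) ≤ p * D (i + 1) :=
        mul_le_mul_of_nonneg_left hle (by linarith)
      have h4 := hD i
      rw [Function.update_self]
      refine ⟨by linarith, by linarith, fun h => by have := h2 h; linarith, by linarith⟩
    · have hle : Function.update D l (D l - 1) (i + 1) ≤ D (i + 1) := by
        by_cases h : i + 1 = l
        · subst h; simp
        · rw [Function.update_of_ne h]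
      have : p * Function.update D l (D l - 1) (i + 1) ≤ p * D (i + 1) :=
        mul_le_mul_of_nonneg_left hle (by linarith)
      have h4 := hD i
      rw [Function.update_of_ne hi]
      exact ⟨h4.1, h4.2.1, h4.2.2.1, by linarith⟩)
  have e := Finset.sum_update_of_mem (Finset.mem_univ l) D (D l - 1)
  have e2 := Finset.add_sum_erase Finset.univ D (Finset.mem_univ l)
  rw [Finset.sdiff_singleton_eq_erase] at e
  have : 0 ≤ ∑ i ∈ Finset.univ.erase l, D i := Finset.sum_nonneg fun i _ => (hD i).1
  omega

/-- Given a supply `D` of carries, some `δ ≤ D` added to a carry vector removes exactly one atom of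
class `c` from the bin. At another class `l` it never removes atoms, and it adds some only if
`δ l = D l`. It is the `δ` of largest sum bounded by `D` that removes no atoms outside `c` and at
most one at `c`. -/
theorem exists_release {p : ℤ} (hp : 2 ≤ p) {D : ZMod f → ℤ} (hD : ∀ l, 0 ≤ D l) (c : ZMod f)
    (hc : 1 ≤ D c) (hcz : p * D (c + 1) + 1 ≤ D c ∨ ∃ z, D z = 0) :
    ∃ δ : ZMod f → ℤ, (∀ l, 0 ≤ δ l ∧ δ l ≤ D l) ∧ δ c = p * δ (c + 1) + 1 ∧
      ∀ l, l ≠ c → 0 ≤ p * δ (l + 1) - δ l ∧ (p * δ (l + 1) - δ l = 0 ∨ δ l = D l) := by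
  obtain ⟨δ, hδ, hmin⟩ := exists_min_sum
    (P := fun δ => ∀ l, 0 ≤ δ l ∧ δ l ≤ D l ∧ δ l ≤ p * δ (l + 1) + if l = c then 1 else 0)
    (D₀ := 0)
    (fun l => ⟨le_rfl, hD l, by simp only [Pi.zero_apply]; split_ifs <;> simp⟩)
    (fun δ => (∑ l, (D l - δ l)).toNat)
  have tight : ∀ l, δ l = D l ∨ δ l = p * δ (l + 1) + if l = c then 1 else 0 := by
    intro l
    by_contra! hcon
    obtain ⟨h1, h2⟩ := hcon
    have h1' : δ l + 1 ≤ D l := by have := (hδ l).2.1; omega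
    have h2' : δ l + 1 ≤ p * δ (l + 1) + if l = c then 1 else 0 := by
      have := (hδ l).2.2; omega
    have := hmin (Function.update δ l (δ l + 1)) (by
      intro i
      have hle : δ (i + 1) ≤ Function.update δ l (δ l + 1) (i + 1) := by
        by_cases h : i + 1 = l
        · subst h; simp
        · rw [Function.update_of_ne h]
      have hle' := mul_le_mul_of_nonneg_left hle (show 0 ≤ p by linarith)
      have h4 := hδ i
      by_cases hi : i = l
      · subst hi
        rw [Function.update_self]
        exact ⟨by linarith, h1', by linarith⟩
      · rw [Function.update_of_ne hi]
        exact ⟨h4.1, h4.2.1, by linarith⟩)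
    have e := Finset.sum_update_of_mem (Finset.mem_univ l) δ (δ l + 1)
    have e2 := Finset.add_sum_erase Finset.univ δ (Finset.mem_univ l)
    rw [Finset.sdiff_singleton_eq_erase] at e
    have hlt : ∑ i, δ i < ∑ i, D i :=
      Finset.sum_lt_sum (fun i _ => (hδ i).2.1) ⟨l, Finset.mem_univ l, by omega⟩
    simp only [Finset.sum_sub_distrib] at this
    omega
  refine ⟨δ, fun l => ⟨(hδ l).1, (hδ l).2.1⟩, ?_, ?_⟩
  · rcases tight c with h | h
    · have h3 := (hδ c).2.2
      rw [if_pos rfl] at h3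
      by_contra hne
      have h4 : δ c ≤ p * δ (c + 1) := by omega
      rcases hcz with h5 | ⟨z, hz⟩
      · have := mul_le_mul_of_nonneg_left (hδ (c + 1)).2.1 (show 0 ≤ p by linarith)
        linarith
      · have : 1 ≤ δ z := by
          refine circle_induction (P := fun l => 1 ≤ δ l) c (by omega) ?_ z
          intro l hl
          have : δ l ≤ p * δ (l + 1) := by
            by_cases h : l = c
            · subst h; exact h4
            · have := (hδ l).2.2; rw [if_neg h] at this; linarith
          by_contra! h
          nlinarith
        have := (hδ z).2.1
        omega
    · simpa using h
  · intro l hl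
    have h3 := (hδ l).2.2
    have := tight l
    rw [if_neg hl] at h3 this
    refine ⟨by linarith, ?_⟩
    rcases this with h | h
    · exact Or.inr h
    · left; linarith

end ModestWeight

/-! ### Families of bins and improving exchanges -/

namespace ModestWeight

variable {f : ℕ} [NeZero f]

/-- The total type of the bins `0, …, j - 1`, i.e. the type of the `j`-th cut. -/
def cumType (p : ℤ) (ρ w : ℕ → ZMod f → ℤ) (j : ℕ) (l : ZMod f) : ℤ :=
  ∑ b ∈ Finset.range j, binType p (ρ b) (w b) l

/-- The first `d` bins have nonnegative carry vectors and nonnegative types. -/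
def Valid (p : ℤ) (ρ w : ℕ → ZMod f → ℤ) (d : ℕ) : Prop :=
  ∀ b < d, ∀ l, 0 ≤ w b l ∧ 0 ≤ binType p (ρ b) (w b) l

/-- The family `w'` improves `w` with respect to the threshold `Z`, which in applications counts the
atoms below some level `h` in each class. The cuts after `j₀` lose an atom of class `c` above the
threshold and gain only below it. The earlier cuts also gain only below the threshold, and no
more than the following cut of `w` contained. -/
def Improves (p : ℤ) (ρ w w' : ℕ → ZMod f → ℤ) (d : ℕ) (Z : ZMod f → ℤ) : Prop :=
  Valid p ρ w' d ∧ ∃ c : ZMod f, ∃ j₀ < d,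
    (∀ j, 1 ≤ j → j ≤ j₀ → ∀ l,
      cumType p ρ w' j l ≤ max (cumType p ρ w j l) (min (cumType p ρ w (j + 1) l) (Z l))) ∧
    ∀ j, j₀ < j → j ≤ d →
      (∀ l, cumType p ρ w' j l ≤ max (cumType p ρ w j l) (Z l)) ∧
      cumType p ρ w' j c < cumType p ρ w j c ∧ Z c < cumType p ρ w j c

theorem cumType_mono {p : ℤ} {ρ w : ℕ → ZMod f → ℤ} {d : ℕ} (hv : Valid p ρ w d) {i j : ℕ}
    (hij : i ≤ j) (hj : j ≤ d) (l : ZMod f) : cumType p ρ w i l ≤ cumType p ρ w j l := by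
  unfold cumType
  apply Finset.sum_le_sum_of_subset_of_nonneg
  · intro b; simp only [Finset.mem_range]; omega
  · intro b hb _
    exact (hv b (by simp only [Finset.mem_range] at hb; omega) l).2

theorem cumType_nonneg {p : ℤ} {ρ w : ℕ → ZMod f → ℤ} {d : ℕ} (hv : Valid p ρ w d) {j : ℕ}
    (hj : j ≤ d) (l : ZMod f) : 0 ≤ cumType p ρ w j l := by
  have := cumType_mono hv (Nat.zero_le j) hj l
  simpa [cumType] using this

theorem exists_top {P : ℕ → Prop} {d : ℕ} (h : ∃ b < d, P b) :
    ∃ b < d, P b ∧ ∀ j, b < j → j < d → ¬ P j := by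
  obtain ⟨b, hb, hP⟩ := h
  refine ⟨Nat.findGreatest P (d - 1), ?_, ?_, ?_⟩
  · have := Nat.findGreatest_le (P := P) (d - 1); omega
  · exact Nat.findGreatest_spec (show b ≤ d - 1 by omega) hP
  · intro j hj hjd
    exact Nat.findGreatest_is_greatest hj (by omega)

/-- The effect on the cuts of adding `δ` to the carry vector of bin `b₀`. -/
theorem cumType_add {p : ℤ} {ρ w : ℕ → ZMod f → ℤ} (b₀ : ℕ) (δ : ZMod f → ℤ) (j : ℕ)
    (l : ZMod f) :
    cumType p ρ (Function.update w b₀ (w b₀ + δ)) j l =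
      cumType p ρ w j l + if b₀ < j then p * δ (l + 1) - δ l else 0 := by
  unfold cumType
  induction j with
  | zero => simp
  | succ j ih =>
    rw [Finset.sum_range_succ, Finset.sum_range_succ, ih]
    by_cases h : j = b₀
    · subst h
      simp only [Function.update_self, lt_irrefl, if_false, Nat.lt_succ_self, if_true, binType,
        Pi.add_apply]
      ring
    · rw [Function.update_of_ne h]
      by_cases h2 : b₀ < j
      · rw [if_pos h2, if_pos (by omega)]; ring
      · rw [if_neg h2, if_neg (by omega)]; ring

theorem binType_add {p : ℤ} {ρ w δ : ZMod f → ℤ} (l : ZMod f) :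
    binType p ρ (w + δ) l = binType p ρ w l + (p * δ (l + 1) - δ l) := by
  simp only [binType, Pi.add_apply]; ring

theorem valid_update {p : ℤ} {ρ w : ℕ → ZMod f → ℤ} {d b₀ : ℕ} {δ : ZMod f → ℤ}
    (hv : Valid p ρ w d) (hδ : ∀ l, 0 ≤ δ l)
    (hx : ∀ l, 0 ≤ binType p (ρ b₀) (w b₀) l + (p * δ (l + 1) - δ l)) :
    Valid p ρ (Function.update w b₀ (w b₀ + δ)) d := by
  intro b hb l
  by_cases h : b = b₀
  · subst h
    rw [Function.update_self, binType_add]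
    exact ⟨add_nonneg (hv b hb l).1 (hδ l), hx l⟩
  · rw [Function.update_of_ne h]; exact hv b hb l

/-- The basic exchange. The function `γ` assigns an owner to each class, a value `≥ d` meaning that
there is none. Each owner gives up a carry at the classes it owns, together with the carries this
forces (`exists_closure`). A class `l` gains an atom only where the owner changes from `l` to
`l + 1`, and the hypotheses keep these gains harmless. The owner of `c + 1` loses atoms of class `c`
unless the loss is compensated by further carries; in that case one atom of class `c` is released
separately (`exists_release`). -/
theorem exists_improves_of_path {p : ℤ} (hp : 2 ≤ p) {ρ w : ℕ → ZMod f → ℤ} {d : ℕ}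
    (hρ : ∀ b l, 0 ≤ ρ b l) (hρ' : ∀ b l, 1 ≤ b → p - 1 ≤ ρ b l) (hv : Valid p ρ w d)
    {Z : ZMod f → ℤ} (hZ : ∀ l, 0 ≤ Z l) (hz : ∀ b < d, ∃ z, w b z = 0)
    (γ : ZMod f → ℕ) (hγ1 : ∀ l, γ l < d → 1 ≤ w (γ l) l)
    (hγ2 : ∀ l, γ l < d → γ l = γ (l + 1) ∨
      ((∀ j, γ l < j → j < d → w j l = 0) ∧ (γ (l + 1) < d → w (γ (l + 1)) l = 0)))
    (hγ3 : ∀ l, γ l < d → cumType p ρ w d l ≤ Z l ∨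
      (γ (l + 1) < d ∧ cumType p ρ w d l ≤ Z l + (p - 1)))
    (hγ4 : ∀ l, γ l < d → d ≤ γ (l + 1) → cumType p ρ w d l < Z l)
    (c : ZMod f) (hc : γ (c + 1) < d) (hcZ : Z c < cumType p ρ w d c) :
    ∃ w', Improves p ρ w w' d Z := by
  have hclo : ∀ b, ∃ D : ZMod f → ℤ, b < d → ∀ l, 0 ≤ D l ∧ D l ≤ w b l ∧
      (γ l = b → 1 ≤ D l) ∧
      0 ≤ binType p (ρ b) (w b) l + D l - p * D (l + 1) ∧
      (D l ≤ 0 ∨ (γ l = b ∧ D l ≤ 1) ∨ D l ≤ p * D (l + 1) - binType p (ρ b) (w b) l) := by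
    intro b
    by_cases hb : b < d
    · obtain ⟨D, hD⟩ := exists_closure hp (fun l => (hv b hb l).1) (hρ b) (fun l => γ l = b)
        (fun l h => by subst h; exact hγ1 l hb)
      exact ⟨D, fun _ => hD⟩
    · exact ⟨0, fun h => absurd h hb⟩
  choose D hD using hclo
  -- the change of the type of each bin
  set Δ : ℕ → ZMod f → ℤ := fun b l => D b l - p * D b (l + 1) with hΔ
  set w' : ℕ → ZMod f → ℤ := fun b l => w b l - D b l with hw'
  have hbin : ∀ b l, binType p (ρ b) (w' b) l = binType p (ρ b) (w b) l + Δ b l := by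
    intro b l; simp only [binType, hw', hΔ]; ring
  have hcum : ∀ j l, cumType p ρ w' j l = cumType p ρ w j l + ∑ b ∈ Finset.range j, Δ b l := by
    intro j l; simp only [cumType, hbin, Finset.sum_add_distrib]
  have hv' : Valid p ρ w' d := by
    intro b hb l
    rw [hbin]
    have := hD b hb l
    simp only [hw', hΔ]
    exact ⟨by linarith, by linarith⟩
  have hpD : ∀ b < d, ∀ l, 1 ≤ D b l → p ≤ p * D b l := fun b hb l h => by nlinarith
  have hpD0 : ∀ b < d, ∀ l, 0 ≤ p * D b l := fun b hb l =>
    mul_nonneg (by linarith) (hD b hb l).1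
  have hΔ1 : ∀ b < d, ∀ l, Δ b l ≤ if γ l = b ∧ γ l ≠ γ (l + 1) then 1 else 0 := by
    intro b hb l
    have h1 := hD b hb l
    have h2 := hpD0 b hb (l + 1)
    have h3 := (hv b hb l).2
    have h4 := (hD b hb (l + 1)).2.2.1
    have h5 := hpD b hb (l + 1)
    simp only [hΔ]
    by_cases hg : γ l = b
    · by_cases hg' : γ l = γ (l + 1)
      · have := h5 (h4 (hg' ▸ hg))
        rw [if_neg (by tauto)]
        rcases h1.2.2.2.2 with h | h | h <;> linarith
      · rw [if_pos ⟨hg, hg'⟩]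
        rcases h1.2.2.2.2 with h | h | h <;> linarith
    · rw [if_neg (by tauto)]
      rcases h1.2.2.2.2 with h | h | h
      · linarith
      · exact absurd h.1 hg
      · linarith
  have hΔpos : ∀ b < d, ∀ l, 1 ≤ D b (l + 1) → Δ b l ≤ 0 := by
    intro b hb l h
    have h1 := hD b hb l
    have h3 := (hv b hb l).2
    have h5 := hpD b hb (l + 1) h
    simp only [hΔ]
    rcases h1.2.2.2.2 with h | h | h <;> linarith
  -- the total change of a cut; `hGb` isolates the contribution of one bin
  have hG : ∀ j ≤ d, ∀ l, ∑ b ∈ Finset.range j, Δ b l ≤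
      if γ l < j ∧ γ l ≠ γ (l + 1) then 1 else 0 := by
    intro j hj l
    calc _ ≤ ∑ b ∈ Finset.range j, (if γ l = b ∧ γ l ≠ γ (l + 1) then (1 : ℤ) else 0) :=
          Finset.sum_le_sum fun b hb => hΔ1 b (by simp only [Finset.mem_range] at hb; omega) l
      _ = _ := by
          by_cases h : γ l = γ (l + 1)
          · simp [h]
          · simp [h]
  have hGb : ∀ j ≤ d, ∀ l, ∀ b < j, ∑ b ∈ Finset.range j, Δ b l ≤ Δ b l +
      if γ l < j ∧ γ l ≠ b ∧ γ l ≠ γ (l + 1) then 1 else 0 := by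
    intro j hj l b hb
    rw [← Finset.add_sum_erase _ _ (Finset.mem_range.mpr hb)]
    gcongr
    calc _ ≤ ∑ i ∈ (Finset.range j).erase b,
            (if γ l = i ∧ γ l ≠ γ (l + 1) then (1 : ℤ) else 0) :=
          Finset.sum_le_sum fun i hi => hΔ1 i (by
            simp only [Finset.mem_range, Finset.mem_erase] at hi; omega) l
      _ ≤ _ := by
          by_cases h : γ l = γ (l + 1)
          · simp [h]
          · simp only [h, ne_eq, not_false_eq_true, and_true, Finset.sum_ite_eq,
              Finset.mem_erase, Finset.mem_range]
            simp only [and_comm, le_refl]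
  -- a switch at `l` costs bin `γ (l + 1)` at least `p`
  have hsw : ∀ l, γ l < d → γ l ≠ γ (l + 1) → ∀ j ≤ d, γ (l + 1) < j →
      ∑ b ∈ Finset.range j, Δ b l ≤ 1 - p := by
    intro l hl hne j hj hlj
    have h1 := hGb j hj l _ hlj
    have hb : γ (l + 1) < d := by omega
    have h2 : D (γ (l + 1)) l ≤ 0 := by
      have := (hD _ hb l).2.1
      rcases hγ2 l hl with h | h
      · exact absurd h hne
      · rw [h.2 hb] at this; exact this
    have h3 := hpD _ hb (l + 1) ((hD _ hb (l + 1)).2.2.1 rfl)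
    have h4 : Δ (γ (l + 1)) l ≤ -p := by simp only [hΔ]; linarith
    split_ifs at h1 <;> linarith
  have hcut : ∀ j, 1 ≤ j → j < d → ∀ l,
      cumType p ρ w' j l ≤ max (cumType p ρ w j l) (min (cumType p ρ w (j + 1) l) (Z l)) := by
    intro j hj1 hjd l
    rw [hcum]
    have h1 := hG j hjd.le l
    by_cases hg : γ l < j ∧ γ l ≠ γ (l + 1)
    · rw [if_pos hg] at h1
      have hld : γ l < d := by omega
      by_cases hlj : γ (l + 1) < j
      · have := hsw l hld hg.2 j hjd.le hlj
        exact le_max_of_le_left (by linarith)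
      · have hXj : cumType p ρ w j l + 1 ≤ cumType p ρ w (j + 1) l := by
          have hw0 : w j l = 0 := by
            rcases hγ2 l hld with h | h
            · exact absurd h hg.2
            · exact h.1 j hg.1 hjd
          have h0 : cumType p ρ w (j + 1) l = cumType p ρ w j l + binType p (ρ j) (w j) l :=
            Finset.sum_range_succ _ _
          have h2 := hρ' j l hj1
          have h3 := (hv j hjd (l + 1)).1
          have h4 : 0 ≤ p * w j (l + 1) := mul_nonneg (by linarith) h3
          have h6 : binType p (ρ j) (w j) l = ρ j l + p * w j (l + 1) := by
            simp [binType, hw0]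
          linarith
        refine le_max_of_le_right (le_min (by linarith) ?_)
        · have hXd := cumType_mono hv (show j + 1 ≤ d by omega) le_rfl l
          rcases hγ3 l hld with h | ⟨h, h'⟩
          · linarith
          -- the bin `γ (l + 1) ≥ j` has at least `2 p - 1` atoms of class `l`
          · set b' := γ (l + 1) with hb'
            have hw0 : w b' l = 0 := by
              rcases hγ2 l hld with h2 | h2
              · exact absurd h2 hg.2
              · exact h2.2 h
            have h0 : cumType p ρ w (b' + 1) l =
              cumType p ρ w b' l + binType p (ρ b') (w b') l := Finset.sum_range_succ _ _
            have h2 := hρ' b' l (by omega)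
            have h3 := hγ1 (l + 1) h
            have h4 : p ≤ p * w b' (l + 1) := by nlinarith
            have h5 := cumType_mono hv (show b' + 1 ≤ d by omega) le_rfl l
            have h6 : binType p (ρ b') (w b') l = ρ b' l + p * w b' (l + 1) := by
              simp [binType, hw0]
            have h7 := cumType_mono hv (show j ≤ b' by omega) h.le l
            linarith
    · rw [if_neg hg] at h1
      exact le_max_of_le_left (by linarith)
  have hlast : ∀ l, cumType p ρ w' d l ≤ max (cumType p ρ w d l) (Z l) := by
    intro l
    rw [hcum]
    have h1 := hG d le_rfl l
    by_cases hg : γ l < d ∧ γ l ≠ γ (l + 1)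
    · by_cases hlj : γ (l + 1) < d
      · have := hsw l hg.1 hg.2 d le_rfl hlj
        exact le_max_of_le_left (by linarith)
      · have := hγ4 l hg.1 (not_lt.mp hlj)
        rw [if_pos hg] at h1
        exact le_max_of_le_right (by linarith)
    · rw [if_neg hg] at h1
      exact le_max_of_le_left (by linarith)
  by_cases hcase : ∃ g, Z g < cumType p ρ w d g ∧ cumType p ρ w' d g < cumType p ρ w d g
  · obtain ⟨g, hg1, hg2⟩ := hcase
    refine ⟨w', hv', g, d - 1, by omega, fun j h1 h2 l => hcut j h1 (by omega) l, ?_⟩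
    intro j h1 h2
    obtain rfl : j = d := by omega
    exact ⟨hlast, hg2, hg1⟩
  push Not at hcase
  -- no class exceeding `Z` is lost; in particular no bin changes its class-`c` part
  have hc0 : ∀ b < d, Δ b c = 0 := by
    have h1 := hcase c hcZ
    rw [hcum] at h1
    have hng : ¬ (γ c < d ∧ γ c ≠ γ (c + 1)) := by
      intro hg
      have := hsw c hg.1 hg.2 d le_rfl hc
      linarith
    have hle : ∀ b ∈ Finset.range d, Δ b c ≤ 0 := by
      intro b hb
      have hb' := Finset.mem_range.mp hb
      have := hΔ1 b hb' c
      rwa [if_neg] at this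
      rintro ⟨rfl, h⟩
      exact hng ⟨hb', h⟩
    have h2 : ∑ b ∈ Finset.range d, Δ b c = 0 :=
      le_antisymm (Finset.sum_nonpos hle) (by linarith)
    intro b hb
    exact (Finset.sum_eq_zero_iff_of_nonpos hle).mp h2 b (Finset.mem_range.mpr hb)
  set b := γ (c + 1) with hb
  have hDc1 := (hD b hc (c + 1)).2.2.1 hb.symm
  have hDc : 2 ≤ D b c := by
    have h1 := hc0 b hc
    have h2 := hpD b hc (c + 1) hDc1
    simp only [hΔ] at h1
    linarith
  obtain ⟨z, hz⟩ := hz b hc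
  have hDz : D b z = 0 := by have := hD b hc z; omega
  obtain ⟨δ, hδ, hδc, hδl⟩ := exists_release hp (D := fun l => max (D b l - 1) 0)
    (fun l => le_max_right _ _) c (le_max_of_le_left (by linarith)) (Or.inr ⟨z, by simp [hDz]⟩)
  -- where `δ` adds atoms, bin `b` had lost even more
  have hY : ∀ l, l ≠ c → p * δ (l + 1) - δ l ≠ 0 →
      p * δ (l + 1) - δ l ≤ - Δ b l - (p - 1) ∧ Δ b l ≤ 0 := by
    intro l hl hne
    have h1 := hδl l hl
    have h2 : δ l = max (D b l - 1) 0 := h1.2.resolve_left hne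
    have h3 := hδ (l + 1)
    have h4 := hδ l
    have hpos : 1 ≤ δ (l + 1) := by
      by_contra! h
      have h5 : δ (l + 1) = 0 := by omega
      rw [h5] at h1 hne
      omega
    have h5 : δ (l + 1) ≤ D b (l + 1) - 1 := by
      have := h3.2
      rcases le_max_iff.mp this with h | h <;> omega
    have h6 := mul_le_mul_of_nonneg_left h5 (show 0 ≤ p by linarith)
    have h7 := le_max_left (D b l - 1) 0
    refine ⟨?_, hΔpos b hc l (by omega)⟩
    simp only [hΔ]
    linarith
  obtain ⟨b₀, hb₀, hxb₀, htop⟩ := exists_top (P := fun b => 1 ≤ binType p (ρ b) (w b) c) (d := d)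
    (by
      by_contra! hcon
      have : cumType p ρ w d c ≤ 0 := Finset.sum_nonpos fun b hb => by
        have := hcon b (Finset.mem_range.mp hb); omega
      linarith [hZ c])
  have hXc : ∀ j, b₀ < j → j ≤ d → cumType p ρ w j c = cumType p ρ w d c := by
    intro j hj hjd
    apply Finset.sum_subset
    · intro i; simp only [Finset.mem_range]; omega
    · intro i hi hi'
      simp only [Finset.mem_range] at hi hi'
      have := htop i (by omega) hi
      have := (hv i hi c).2
      omega
  have hv'' : Valid p ρ (Function.update w' b₀ (w' b₀ + δ)) d := by
    refine valid_update hv' (fun l => (hδ l).1) fun l => ?_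
    by_cases hl : l = c
    · subst hl
      rw [hbin, hc0 b₀ hb₀]; linarith
    · exact add_nonneg (hv' b₀ hb₀ l).2 (hδl l hl).1
  refine ⟨_, hv'', c, b₀, hb₀, ?_, ?_⟩
  · intro j hj1 hj l
    rw [cumType_add, if_neg (by omega), add_zero]
    exact hcut j hj1 (by omega) l
  · intro j hj hjd
    refine ⟨fun l => ?_, ?_, ?_⟩
    · by_cases hY0 : p * δ (l + 1) - δ l ≤ 0
      · rw [cumType_add, if_pos hj]
        have : cumType p ρ w' j l ≤ max (cumType p ρ w j l) (Z l) := by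
          by_cases h : j = d
          · subst h; exact hlast l
          · refine (hcut j (by omega) (by omega) l).trans ?_
            exact max_le_max le_rfl (min_le_right _ _)
        linarith
      · have hlc : l ≠ c := by rintro rfl; exact hY0 (by linarith)
        obtain ⟨h1, h2⟩ := hY l hlc (by omega)
        have h3 := hGb d le_rfl l b hc
        have h4 := cumType_mono hv'' hjd le_rfl l
        rw [cumType_add (j := d), if_pos hb₀, hcum] at h4
        have h5 : ∑ i ∈ Finset.range d, Δ i l ≤ Δ b l + 1 :=
          h3.trans (by split_ifs <;> linarith)
        have h6 : cumType p ρ w d l ≤ Z l := by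
          by_contra! h
          have := hcase l h
          rw [hcum] at this
          linarith
        exact le_max_of_le_right (by linarith)
    · rw [cumType_add, if_pos hj, hcum, hδc]
      have : ∑ b ∈ Finset.range j, Δ b c = 0 := Finset.sum_eq_zero fun b hb =>
        hc0 b (by simp only [Finset.mem_range] at hb; omega)
      linarith
    · rw [hXc j hj hjd]; exact hcZ

end ModestWeight

/-! ### Existence of exchanges -/

namespace ModestWeight

variable {f : ℕ} [NeZero f]

/-- Owners for a run of `n` classes ending at `e`, chosen backwards from `e`: keep the owner of
`l + 1` when its carry at `l` is positive, and otherwise take the last bin with positive carry.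
The value `d` off the run stands for no owner. -/
theorem exists_owner {w : ℕ → ZMod f → ℤ} {d : ℕ} (hw : ∀ b < d, ∀ l, 0 ≤ w b l)
    (e : ZMod f) (n : ℕ) (hn : 1 ≤ n)
    (hW : ∀ l, (e - l).val < n → ∃ b < d, 1 ≤ w b l) :
    ∃ γ : ZMod f → ℕ, (∀ l, (e - l).val < n → γ l < d ∧ 1 ≤ w (γ l) l) ∧
      (∀ l, n ≤ (e - l).val → γ l = d) ∧
      (∀ l, l ≠ e → (e - l).val < n → γ l = γ (l + 1) ∨
        ((∀ j, γ l < j → j < d → w j l = 0) ∧ w (γ (l + 1)) l = 0)) ∧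
      (∀ j, γ e < j → j < d → w j e = 0) := by
  have htop : ∀ l, ∃ t : ℕ, (e - l).val < n → t < d ∧ 1 ≤ w t l ∧
      ∀ j, t < j → j < d → w j l = 0 := by
    intro l
    by_cases h : (e - l).val < n
    · obtain ⟨t, h1, h2, h3⟩ := exists_top (P := fun b => 1 ≤ w b l) (hW l h)
      refine ⟨t, fun _ => ⟨h1, h2, fun j hj hjd => ?_⟩⟩
      have := h3 j hj hjd
      have := hw j hjd l
      omega
    · exact ⟨0, fun h' => absurd h' h⟩
  choose t ht using htop
  let g : ℕ → ℕ := fun i => Nat.rec (t e)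
    (fun i gi => if 1 ≤ w gi (e - ((i + 1 : ℕ) : ZMod f)) then gi
      else t (e - ((i + 1 : ℕ) : ZMod f))) i
  have g0 : g 0 = t e := rfl
  have gs : ∀ i, g (i + 1) = if 1 ≤ w (g i) (e - ((i + 1 : ℕ) : ZMod f)) then g i
      else t (e - ((i + 1 : ℕ) : ZMod f)) := fun i => rfl
  have hcast : ∀ l : ZMod f, e - (((e - l).val : ℕ) : ZMod f) = l := by
    intro l; rw [ZMod.natCast_zmod_val]; ring
  have hval : ∀ l : ZMod f, l ≠ e → (e - l).val = (e - (l + 1)).val + 1 := by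
    intro l hl
    have h1 : (e - l).val ≠ 0 := by
      rw [Ne, ZMod.val_eq_zero, sub_eq_zero]; exact fun h => hl h.symm
    have h2 : (e - (l + 1)) = (((e - l).val - 1 : ℕ) : ZMod f) := by
      rw [Nat.cast_sub (by omega), ZMod.natCast_zmod_val]; push_cast; ring
    have h3 := ZMod.val_lt (e - l)
    rw [h2, ZMod.val_natCast, Nat.mod_eq_of_lt (by omega)]
    omega
  have hg : ∀ i < n, i < f → g i < d ∧ 1 ≤ w (g i) (e - (i : ZMod f)) := by
    intro i
    have hvi : ∀ i : ℕ, i < f → (e - (e - (i : ZMod f))).val = i := by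
      intro i hi; rw [sub_sub_cancel, ZMod.val_natCast, Nat.mod_eq_of_lt hi]
    induction i with
    | zero =>
      intro h hf
      have := ht e (by simpa using Nat.pos_of_ne_zero (by omega))
      rw [g0]; simpa using ⟨this.1, this.2.1⟩
    | succ i ih =>
      intro h hf
      have h1 := ih (by omega) (by omega)
      rw [gs]
      split_ifs with h2
      · exact ⟨h1.1, h2⟩
      · have := ht (e - ((i + 1 : ℕ) : ZMod f)) (by rw [hvi _ hf]; exact h)
        exact ⟨this.1, this.2.1⟩
  refine ⟨fun l => if (e - l).val < n then g (e - l).val else d, ?_, ?_, ?_, ?_⟩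
  · intro l hl
    simp only [if_pos hl]
    have := hg _ hl (ZMod.val_lt _)
    rwa [hcast] at this
  · intro l hl
    simp only [if_neg (not_lt.mpr hl)]
  · intro l hle hl
    have h1 := hval l hle
    have h2 : (e - (l + 1)).val < n := by omega
    simp only [if_pos hl, if_pos h2]
    have h3 := gs (e - (l + 1)).val
    rw [← h1, hcast] at h3
    rw [h3]
    have h4 := (hg _ h2 (ZMod.val_lt _)).1
    split_ifs with h5
    · exact Or.inl rfl
    · refine Or.inr ⟨(ht l hl).2.2, ?_⟩
      have := hw _ h4 l
      omega
  · have h0 : (e - e).val < n := by simpa using Nat.pos_of_ne_zero (by omega)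
    simp only [if_pos h0]
    simp only [sub_self, ZMod.val_zero, g0]
    exact (ht e h0).2.2

theorem cumType_eq {p : ℤ} {ρ w : ℕ → ZMod f → ℤ} (d : ℕ) (l : ZMod f) :
    cumType p ρ w d l = ∑ b ∈ Finset.range d, ρ b l +
      p * ∑ b ∈ Finset.range d, w b (l + 1) - ∑ b ∈ Finset.range d, w b l := by
  simp only [cumType, binType, Finset.sum_sub_distrib, Finset.sum_add_distrib, Finset.mul_sum]

/-- If another family `C` has a last cut with fewer atoms of class `c`, where `w` exceeds the threshold,
and exceeds that of `w` only below the threshold, then `w` can be improved. The total carries of `w`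
and `C` differ by `E` with `p * E (l + 1) - E l` the difference of the last cuts: if `E c > 0`, an
atom of class `c` can be released, and if not, `E (c + 1) < 0`, so `w` has carries at `c + 1` that
can be lowered along a run of classes. -/
theorem exists_improves_of_lower {p : ℤ} (hp : 2 ≤ p) {ρ w C : ℕ → ZMod f → ℤ} {d : ℕ}
    (hρ : ∀ b l, 0 ≤ ρ b l) (hρ' : ∀ b l, 1 ≤ b → p - 1 ≤ ρ b l) (hv : Valid p ρ w d)
    (hC : Valid p ρ C d) {Z : ZMod f → ℤ} (hZ : ∀ l, 0 ≤ Z l)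
    (hz : ∃ z, ∑ b ∈ Finset.range d, w b z = 0) (c : ZMod f)
    (hcC : cumType p ρ C d c < cumType p ρ w d c) (hcZ : Z c < cumType p ρ w d c)
    (hall : ∀ l, cumType p ρ C d l ≤ max (cumType p ρ w d l) (Z l)) :
    ∃ w', Improves p ρ w w' d Z := by
  set E : ZMod f → ℤ := fun l => ∑ b ∈ Finset.range d, C b l - ∑ b ∈ Finset.range d, w b l
    with hE
  have hX : ∀ l, cumType p ρ C d l - cumType p ρ w d l = p * E (l + 1) - E l := by
    intro l; rw [cumType_eq, cumType_eq, hE]; ring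
  have hC0 : ∀ l, 0 ≤ ∑ b ∈ Finset.range d, C b l := fun l =>
    Finset.sum_nonneg fun b hb => (hC b (Finset.mem_range.mp hb) l).1
  have hwz : ∀ b < d, ∃ z, w b z = 0 := by
    obtain ⟨z, hz⟩ := hz
    intro b hb
    exact ⟨z, (Finset.sum_eq_zero_iff_of_nonneg
      (fun b hb => (hv b (Finset.mem_range.mp hb) z).1)).mp hz b (Finset.mem_range.mpr hb)⟩
  by_cases hEc : 0 < E c
  -- release an atom of class `c` from the highest bin containing one
  · have hcX := hX c
    obtain ⟨δ, hδ, hδc, hδl⟩ := exists_release hp (D := fun l => max (E l) 0)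
      (fun l => le_max_right _ _) c (le_max_of_le_left hEc) (Or.inl (by
        rw [max_eq_left hEc.le]
        rcases le_total (E (c + 1)) 0 with h | h
        · rw [max_eq_right h]; linarith
        · rw [max_eq_left h]; linarith))
    obtain ⟨b₀, hb₀, hxb₀, htop⟩ := exists_top (P := fun b => 1 ≤ binType p (ρ b) (w b) c)
      (d := d) (by
        by_contra! hcon
        have : cumType p ρ w d c ≤ 0 := Finset.sum_nonpos fun b hb => by
          have := hcon b (Finset.mem_range.mp hb); omega
        linarith [hZ c])
    have hXc : ∀ j, b₀ < j → j ≤ d → cumType p ρ w j c = cumType p ρ w d c := by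
      intro j hj hjd
      apply Finset.sum_subset
      · intro i; simp only [Finset.mem_range]; omega
      · intro i hi hi'
        simp only [Finset.mem_range] at hi hi'
        have := htop i (by omega) hi
        have := (hv i hi c).2
        omega
    have hv' : Valid p ρ (Function.update w b₀ (w b₀ + δ)) d := by
      refine valid_update hv (fun l => (hδ l).1) fun l => ?_
      by_cases hl : l = c
      · subst hl; linarith
      · exact add_nonneg (hv b₀ hb₀ l).2 (hδl l hl).1
    refine ⟨_, hv', c, b₀, hb₀, ?_, ?_⟩
    · intro j hj1 hj l
      rw [cumType_add, if_neg (by omega), add_zero]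
      exact le_max_left _ _
    · intro j hj hjd
      refine ⟨fun l => ?_, ?_, ?_⟩
      · by_cases hY0 : p * δ (l + 1) - δ l ≤ 0
        · rw [cumType_add, if_pos hj]
          exact le_max_of_le_left (by linarith)
        · have hlc : l ≠ c := by rintro rfl; exact hY0 (by linarith)
          have h1 := hδl l hlc
          have h2 : δ l = max (E l) 0 := h1.2.resolve_left (by omega)
          have h3 : 1 ≤ δ (l + 1) := by
            by_contra! h
            have : δ (l + 1) = 0 := le_antisymm (by omega) (hδ (l + 1)).1
            rw [this] at hY0
            have := (hδ l).1
            omega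
          have h4 : δ (l + 1) ≤ E (l + 1) := by
            rcases le_max_iff.mp (hδ (l + 1)).2 with h | h <;> omega
          have h5 := mul_le_mul_of_nonneg_left h4 (show 0 ≤ p by linarith)
          have h6 := le_max_left (E l) 0
          have h7 := hX l
          have h8 := cumType_mono hv' hjd le_rfl l
          rw [cumType_add (j := d), if_pos hb₀] at h8
          have h9 := hall l
          rcases le_max_iff.mp h9 with h | h
          · linarith
          · exact le_max_of_le_right (by linarith)
      · rw [cumType_add, if_pos hj, hδc]; linarith
      · rw [hXc j hj hjd]; exact hcZ
  · push Not at hEc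
    -- a run of classes on which the total carry of `w` is positive
    have hstep : ∀ l, E l < 0 → Z l ≤ cumType p ρ w d l → E (l + 1) < 0 := by
      intro l hl hle
      have h1 := hall l
      rw [max_eq_left hle] at h1
      have := hX l
      by_contra! h
      nlinarith
    have hE1 : E (c + 1) < 0 := by
      have := hX c
      by_contra! h
      nlinarith
    have hex : ∃ n : ℕ, 1 ≤ n ∧ cumType p ρ w d (c + n) < Z (c + n) := by
      by_contra! hcon
      have hneg : ∀ n : ℕ, E (c + 1 + n) < 0 := by
        intro n
        induction n with
        | zero => simpa using hE1
        | succ n ih =>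
          have h1 := hcon (n + 1) (by omega)
          rw [show c + ((n + 1 : ℕ) : ZMod f) = c + 1 + n by push_cast; ring] at h1
          have := hstep _ ih h1
          rwa [show c + 1 + ((n + 1 : ℕ) : ZMod f) = c + 1 + n + 1 by push_cast; ring]
      obtain ⟨z, hz⟩ := hz
      have h2 := hneg (z - (c + 1)).val
      rw [ZMod.natCast_zmod_val, add_sub_cancel] at h2
      have := hC0 z
      simp only [hE] at h2
      linarith
    set n := Nat.find hex with hn
    obtain ⟨hn1, hnZ⟩ := Nat.find_spec hex
    rw [← hn] at hn1 hnZ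
    have hmin : ∀ i : ℕ, 1 ≤ i → i < n → Z (c + i) ≤ cumType p ρ w d (c + i) := by
      intro i h1 h2
      have := Nat.find_min hex h2
      push Not at this
      exact this h1
    have hnf : n < f := by
      by_contra! hfn
      rcases eq_or_lt_of_le hfn with h | h
      · rw [← h] at hnZ; simp at hnZ; linarith
      · have h1 := hmin (n - f) (by omega) (by have := NeZero.pos f; omega)
        rw [Nat.cast_sub h.le] at h1
        simp at h1
        linarith
    have hneg : ∀ i : ℕ, 1 ≤ i → i ≤ n → E (c + i) < 0 := by
      intro i h1
      induction i, h1 using Nat.le_induction with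
      | base => intro _; simpa using hE1
      | succ i hi ih =>
        intro h2
        have := hstep _ (ih (by omega)) (hmin i hi (by omega))
        rwa [show c + ((i + 1 : ℕ) : ZMod f) = c + i + 1 by push_cast; ring]
    -- the last class before the end of the run exceeding `Z`
    obtain ⟨i₀, hi₀, hi₀Z, hi₀top⟩ := exists_top
      (P := fun i : ℕ => Z (c + i) < cumType p ρ w d (c + i)) (d := n)
      ⟨0, by omega, by simpa using hcZ⟩
    have hidx : ∀ l : ZMod f, (c + n - l).val < n - i₀ → ∃ i : ℕ, i₀ < i ∧ i ≤ n ∧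
        l = c + i ∧ (c + n - l).val = n - i := by
      intro l hl
      refine ⟨n - (c + n - l).val, by omega, by omega, ?_, by omega⟩
      rw [Nat.cast_sub (by omega), ZMod.natCast_zmod_val]; ring
    have hvalidx : ∀ i : ℕ, i ≤ n → (c + n - (c + i : ZMod f)).val = n - i := by
      intro i hi
      rw [show (c + n - (c + i : ZMod f)) = ((n - i : ℕ) : ZMod f) by
        rw [Nat.cast_sub hi]; ring, ZMod.val_natCast, Nat.mod_eq_of_lt (by omega)]
    obtain ⟨γ, hg1, hg2, hg3, hg4⟩ := exists_owner (d := d)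
      (fun b hb l => (hv b hb l).1) (c + n) (n - i₀) (by omega) (by
        intro l hl
        obtain ⟨i, h1, h2, rfl, -⟩ := hidx l hl
        have h3 := hneg i (by omega) h2
        by_contra! hcon
        have : ∑ b ∈ Finset.range d, w b (c + i) ≤ 0 := Finset.sum_nonpos fun b hb => by
          have := hcon b (Finset.mem_range.mp hb); omega
        have := hC0 (c + i)
        simp only [hE] at h3
        linarith)
    have hin : ∀ l, γ l < d → (c + n - l).val < n - i₀ := by
      intro l hl
      by_contra! h
      have := hg2 l h
      omega
    have hend : γ (c + n + 1) = d := by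
      apply hg2
      rw [show c + n - (c + n + 1 : ZMod f) = ((f - 1 : ℕ) : ZMod f) by
        rw [Nat.cast_sub (NeZero.pos f)]; simp, ZMod.val_natCast,
        Nat.mod_eq_of_lt (by have := NeZero.pos f; omega)]
      omega
    refine exists_improves_of_path hp hρ hρ' hv hZ hwz γ (fun l hl => (hg1 l (hin l hl)).2)
      ?_ ?_ ?_ (c + i₀) ?_ hi₀Z
    · intro l hl
      by_cases hle : l = c + n
      · subst hle
        exact Or.inr ⟨hg4, fun h => by rw [hend] at h; omega⟩
      · rcases hg3 l hle (hin l hl) with h | h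
        · exact Or.inl h
        · exact Or.inr ⟨h.1, fun _ => h.2⟩
    · intro l hl
      obtain ⟨i, h1, h2, rfl, -⟩ := hidx l (hin l hl)
      left
      rcases eq_or_lt_of_le h2 with h | h
      · rw [h]; exact hnZ.le
      · exact not_lt.mp (hi₀top i h1 h)
    · intro l hl hl'
      obtain ⟨i, h1, h2, rfl, -⟩ := hidx l (hin l hl)
      rcases eq_or_lt_of_le h2 with h | h
      · rw [h]; exact hnZ
      · exfalso
        have h3 := (hg1 (c + i + 1) (by
          rw [show (c + i + 1 : ZMod f) = c + ((i + 1 : ℕ) : ZMod f) by push_cast; ring,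
            hvalidx _ (by omega)]
          omega)).1
        omega
    · refine (hg1 _ ?_).1
      rw [show (c + i₀ + 1 : ZMod f) = c + ((i₀ + 1 : ℕ) : ZMod f) by push_cast; ring,
            hvalidx _ (by omega)]
      omega

/-- If the last carry vector is positive everywhere, its bin can be emptied partially without any
bin gaining an atom. -/
theorem exists_improves_of_full_bin {p : ℤ} (hp : 2 ≤ p) {ρ w : ℕ → ZMod f → ℤ} {d : ℕ}
    (hρ : ∀ b l, 0 ≤ ρ b l) (hv : Valid p ρ w (d + 1)) (hpos : ∀ l, 1 ≤ w d l) :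
    ∃ w', Improves p ρ w w' (d + 1) 0 := by
  obtain ⟨D, hD⟩ := exists_closure hp (fun l => (hv d (by omega) l).1) (hρ d) (fun _ => True)
    (fun l _ => hpos l)
  have hΔ : ∀ l, D l - p * D (l + 1) ≤ 0 := by
    intro l
    have h1 := hD l
    have h2 := (hD (l + 1)).2.2.1 trivial
    have h3 := (hv d (by omega) l).2
    have h4 : p ≤ p * D (l + 1) := by nlinarith
    rcases h1.2.2.2.2 with h | h | h <;> linarith
  obtain ⟨g, hg⟩ : ∃ g, D g - p * D (g + 1) < 0 := by
    by_contra! hcon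
    have h1 : ∑ l, (D l - p * D (l + 1)) = 0 :=
      Finset.sum_eq_zero fun l _ => le_antisymm (hΔ l) (hcon l)
    have hsh : ∑ l, D (l + 1) = ∑ l, D l := Equiv.sum_comp (Equiv.addRight (1 : ZMod f)) D
    rw [Finset.sum_sub_distrib, ← Finset.mul_sum, hsh] at h1
    have h2 : 0 < ∑ l, D l := Finset.sum_pos (fun l _ => (hD l).2.2.1 trivial) ⟨0, by simp⟩
    nlinarith
  set w' : ℕ → ZMod f → ℤ := Function.update w d (w d - D) with hw'
  have hbin : ∀ l, binType p (ρ d) (w d - D) l =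
      binType p (ρ d) (w d) l + (D l - p * D (l + 1)) := by
    intro l; simp only [binType, Pi.sub_apply]; ring
  have hlow : ∀ j ≤ d, ∀ l, cumType p ρ w' j l = cumType p ρ w j l := by
    intro j hj l
    refine Finset.sum_congr rfl fun b hb => ?_
    rw [hw', Function.update_of_ne (by simp only [Finset.mem_range] at hb; omega)]
  have hlast : ∀ l, cumType p ρ w' (d + 1) l =
      cumType p ρ w (d + 1) l + (D l - p * D (l + 1)) := by
    intro l
    have h1 : cumType p ρ w' (d + 1) l = cumType p ρ w' d l + binType p (ρ d) (w' d) l :=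
      Finset.sum_range_succ _ _
    have h2 : cumType p ρ w (d + 1) l = cumType p ρ w d l + binType p (ρ d) (w d) l :=
      Finset.sum_range_succ _ _
    rw [h1, h2, hlow d le_rfl, hw', Function.update_self, hbin]; ring
  have hv' : Valid p ρ w' (d + 1) := by
    intro b hb l
    by_cases h : b = d
    · subst h
      rw [hw', Function.update_self, hbin]
      have := hD l
      exact ⟨by simpa using this.2.1, by linarith⟩
    · rw [hw', Function.update_of_ne h]; exact hv b hb l
  refine ⟨w', hv', g, d, by omega, fun j _ hj l => ?_, fun j hj hjd => ?_⟩
  · rw [hlow j hj]; exact le_max_left _ _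
  · obtain rfl : j = d + 1 := by omega
    have h0 := cumType_nonneg hv' le_rfl g
    refine ⟨fun l => le_max_of_le_left ?_, ?_, ?_⟩
    · rw [hlast]; linarith [hΔ l]
    · rw [hlast]; linarith
    · rw [hlast] at h0; simp only [Pi.zero_apply]; linarith

/-- If the carries do not vanish jointly at any class, then every class has an owner, and the exchange
runs around the whole circle. The zeros of the first `d` bins at `l₀` make the last bin
the owner of `l₀`, so that the owners match up when the circle closes there. -/
theorem exists_improves_of_circle {p : ℤ} (hp : 2 ≤ p) {ρ w : ℕ → ZMod f → ℤ} {d : ℕ}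
    (hρ : ∀ b l, 0 ≤ ρ b l) (hρ' : ∀ b l, 1 ≤ b → p - 1 ≤ ρ b l) (hv : Valid p ρ w (d + 1))
    {Z : ZMod f → ℤ} (hZ : ∀ l, 0 ≤ Z l) {l₀ : ZMod f}
    (hl₀ : ∑ b ∈ Finset.range d, w b l₀ = 0)
    (hW : ∀ l, 1 ≤ ∑ b ∈ Finset.range (d + 1), w b l) (hz : ∃ z, w d z = 0)
    (g : ZMod f) (hg : Z g < cumType p ρ w (d + 1) g)
    (hall : ∀ l, cumType p ρ w (d + 1) l ≤ Z l + (p - 1)) :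
    ∃ w', Improves p ρ w w' (d + 1) Z := by
  have hzero : ∀ b < d, w b l₀ = 0 := fun b hb =>
    (Finset.sum_eq_zero_iff_of_nonneg (fun b hb => (hv b (by
      simp only [Finset.mem_range] at hb; omega) l₀).1)).mp hl₀ b (Finset.mem_range.mpr hb)
  obtain ⟨γ, hg1, -, hg3, hg4⟩ := exists_owner (d := d + 1) (fun b hb l => (hv b hb l).1) l₀ f
    (NeZero.pos f) (by
      intro l _
      by_contra! hcon
      have : ∑ b ∈ Finset.range (d + 1), w b l ≤ 0 := Finset.sum_nonpos fun b hb => by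
        have := hcon b (Finset.mem_range.mp hb); omega
      linarith [hW l])
  have hγ : ∀ l, γ l < d + 1 ∧ 1 ≤ w (γ l) l := fun l => hg1 l (ZMod.val_lt _)
  have hγ0 : γ l₀ = d := by
    have h1 := hγ l₀
    by_contra h
    rw [hzero _ (by omega)] at h1
    omega
  refine exists_improves_of_path hp hρ hρ' hv hZ ?_ γ (fun l _ => (hγ l).2) ?_
    (fun l _ => Or.inr ⟨(hγ _).1, hall l⟩) ?_ g (hγ _).1 hg
  · intro b hb
    by_cases h : b = d
    · subst h; exact hz
    · exact ⟨l₀, hzero b (by omega)⟩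
  · intro l _
    by_cases hl : l = l₀
    · subst hl
      by_cases h : γ l = γ (l + 1)
      · exact Or.inl h
      · refine Or.inr ⟨hg4, fun _ => hzero _ ?_⟩
        have := (hγ (l + 1)).1
        omega
    · rcases hg3 l hl (ZMod.val_lt _) with h | h
      · exact Or.inl h
      · exact Or.inr ⟨h.1, fun _ => h.2⟩
  · intro l _ h
    have := (hγ (l + 1)).1
    omega

end ModestWeight

/-! ### Greedy filling and minimal cost -/

namespace ModestWeight

variable {f : ℕ} [NeZero f]

/-- The number of atoms of class `l` at levels `< h`, for the digit sequence `s`. -/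
def digitCount (s : ℕ → ℤ) (h : ℕ) (l : ZMod f) : ℤ :=
  ∑ i ∈ Finset.range h, if (i : ZMod f) = l then s i else 0

/-- Greedy filling: the number of atoms taken at level `h` when, in each class `l`, `Y l` of the atoms
provided by the digits `κ` are taken, lowest levels first. -/
def seg (κ : ℕ → ℤ) (Y : ZMod f → ℤ) (h : ℕ) : ℤ :=
  max 0 (min (κ h) (Y (h : ZMod f) - digitCount κ h (h : ZMod f)))

/-- The value of the greedy filling with `Y l` atoms in each class `l`, over the levels `< N`. -/
def segVal (p : ℤ) (κ : ℕ → ℤ) (N : ℕ) (Y : ZMod f → ℤ) : ℤ :=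
  ∑ i ∈ Finset.range N, seg κ Y i * p ^ i

theorem digitCount_nonneg {s : ℕ → ℤ} (hs : ∀ i, 0 ≤ s i) (h : ℕ) (l : ZMod f) :
    0 ≤ digitCount s h l :=
  Finset.sum_nonneg fun i _ => by split_ifs <;> simp [hs]

theorem digitCount_mono {s : ℕ → ℤ} (hs : ∀ i, 0 ≤ s i) {h h' : ℕ} (hh : h ≤ h') (l : ZMod f) :
    digitCount s h l ≤ digitCount s h' l := by
  apply Finset.sum_le_sum_of_subset_of_nonneg
  · intro b; simp only [Finset.mem_range]; omega
  · intro i _ _; split_ifs <;> simp [hs]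

theorem digitCount_seg {κ : ℕ → ℤ} (hκ : ∀ i, 0 ≤ κ i) {Y : ZMod f → ℤ} (hY : ∀ l, 0 ≤ Y l)
    (h : ℕ) (l : ZMod f) : digitCount (seg κ Y) h l = min (Y l) (digitCount κ h l) := by
  induction h with
  | zero => simp [digitCount, hY]
  | succ h ih =>
    have e1 : digitCount (seg κ Y) (h + 1) l =
        digitCount (seg κ Y) h l + if (h : ZMod f) = l then seg κ Y h else 0 :=
      Finset.sum_range_succ _ _
    have e2 : digitCount κ (h + 1) l =
        digitCount κ h l + if (h : ZMod f) = l then κ h else 0 :=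
      Finset.sum_range_succ _ _
    rw [e1, e2, ih]
    split_ifs with hl
    · have h1 := hκ h
      have h2 := hY l
      simp only [seg, hl]
      omega
    · simp

theorem digitCount_add_Ico (s : ℕ → ℤ) {h N : ℕ} (hh : h ≤ N) (l : ZMod f) :
    digitCount s N l = digitCount s h l +
      ∑ i ∈ Finset.Ico h N, if (i : ZMod f) = l then s i else 0 := by
  unfold digitCount
  rw [Finset.sum_range_add_sum_Ico _ hh]

theorem seg_nonneg (κ : ℕ → ℤ) (Y : ZMod f → ℤ) (h : ℕ) : 0 ≤ seg κ Y h := le_max_left _ _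

theorem seg_le {κ : ℕ → ℤ} (hκ : ∀ i, 0 ≤ κ i) (Y : ZMod f → ℤ) (h : ℕ) : seg κ Y h ≤ κ h := by
  have := hκ h
  simp only [seg]; omega

theorem seg_mono {κ : ℕ → ℤ} {Y Y' : ZMod f → ℤ} (hY : ∀ l, Y l ≤ Y' l) (h : ℕ) :
    seg κ Y h ≤ seg κ Y' h := by
  have := hY h
  simp only [seg]; omega

theorem seg_le_of_le {κ : ℕ → ℤ} (hκ : ∀ i, 0 ≤ κ i) {Y Y' : ZMod f → ℤ} {h i : ℕ} (hi : h ≤ i)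
    (hY : ∀ l, Y' l ≤ max (Y l) (digitCount κ h l)) : seg κ Y' i ≤ seg κ Y i := by
  have h1 := hY i
  have h2 := digitCount_mono hκ hi (i : ZMod f)
  simp only [seg]; omega

theorem sum_digits_lt {p : ℤ} (hp : 2 ≤ p) {s : ℕ → ℤ} (hs : ∀ i, s i ≤ p - 1) (h : ℕ) :
    ∑ i ∈ Finset.range h, s i * p ^ i < p ^ h := by
  induction h with
  | zero => simp
  | succ h ih =>
    rw [Finset.sum_range_succ, pow_succ]
    have : s h * p ^ h ≤ (p - 1) * p ^ h :=
      mul_le_mul_of_nonneg_right (hs h) (by positivity)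
    linarith

theorem segVal_split {p : ℤ} {κ : ℕ → ℤ} {N h : ℕ} (hh : h ≤ N) (Y : ZMod f → ℤ) :
    segVal p κ N Y = ∑ i ∈ Finset.range h, seg κ Y i * p ^ i +
      ∑ i ∈ Finset.Ico h N, seg κ Y i * p ^ i :=
  (Finset.sum_range_add_sum_Ico _ hh).symm

theorem hi_le {p : ℤ} (hp : 2 ≤ p) {κ : ℕ → ℤ} (hκ : ∀ i, 0 ≤ κ i) {Y Y' : ZMod f → ℤ}
    {h N : ℕ} (hY : ∀ l, Y' l ≤ max (Y l) (digitCount κ h l)) :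
    ∑ i ∈ Finset.Ico h N, seg κ Y' i * p ^ i ≤ ∑ i ∈ Finset.Ico h N, seg κ Y i * p ^ i :=
  Finset.sum_le_sum fun i hi => mul_le_mul_of_nonneg_right
    (seg_le_of_le hκ (Finset.mem_Ico.mp hi).1 hY) (by positivity)

/-- If `Y'` exceeds `Y` only below level `h` and is smaller than `Y` in a class where `Y` reaches level
`h`, then the part of the filling at levels `≥ h` drops by at least `p ^ h`. -/
theorem hi_lt {p : ℤ} (hp : 2 ≤ p) {κ : ℕ → ℤ} (hκ : ∀ i, 0 ≤ κ i) {Y Y' : ZMod f → ℤ}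
    {h N : ℕ} (hh : h ≤ N) (hY0 : ∀ l, 0 ≤ Y l) (hY0' : ∀ l, 0 ≤ Y' l)
    (hK : ∀ l, Y l ≤ digitCount κ N l)
    (hY : ∀ l, Y' l ≤ max (Y l) (digitCount κ h l)) (c : ZMod f) (hc : Y' c < Y c)
    (hcZ : digitCount κ h c < Y c) :
    ∑ i ∈ Finset.Ico h N, seg κ Y' i * p ^ i + p ^ h ≤
      ∑ i ∈ Finset.Ico h N, seg κ Y i * p ^ i := by
  obtain ⟨i, hi, hlt⟩ : ∃ i ∈ Finset.Ico h N, seg κ Y' i < seg κ Y i := by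
    by_contra! hcon
    have h1 := digitCount_add_Ico (seg κ Y) hh c
    have h2 := digitCount_add_Ico (seg κ Y') hh c
    have h3 : ∑ i ∈ Finset.Ico h N, (if (i : ZMod f) = c then seg κ Y i else 0) ≤
        ∑ i ∈ Finset.Ico h N, (if (i : ZMod f) = c then seg κ Y' i else 0) :=
      Finset.sum_le_sum fun i hi => by split_ifs; exacts [hcon i hi, le_rfl]
    simp only [digitCount_seg hκ hY0, digitCount_seg hκ hY0'] at h1 h2
    have := hK c
    omega
  have h1 : ∑ j ∈ Finset.Ico h N, (seg κ Y j - seg κ Y' j) * p ^ j ≥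
      (seg κ Y i - seg κ Y' i) * p ^ i :=
    Finset.single_le_sum (f := fun j => (seg κ Y j - seg κ Y' j) * p ^ j)
      (fun j hj => mul_nonneg (by
        have := seg_le_of_le hκ (Finset.mem_Ico.mp hj).1 hY; linarith) (by positivity)) hi
  have h2 : p ^ h ≤ p ^ i := pow_le_pow_right₀ (by linarith) (Finset.mem_Ico.mp hi).1
  have h3 : 1 * p ^ i ≤ (seg κ Y i - seg κ Y' i) * p ^ i :=
    mul_le_mul_of_nonneg_right (by linarith) (by positivity)
  simp only [sub_mul, Finset.sum_sub_distrib] at h1 h3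
  linarith

/-- An improving exchange lowers the last cut and the total cost. For `j ≤ j₀` the
`j`-th cut grows at most by the difference of the parts below level `h` of the cuts `j + 1` and `j`
of `w`, so these gains telescope to the part below level `h` of the cut `j₀ + 1`. Every later cut
drops by more than its own part below level `h`, because the drop at levels `≥ h` is at least `p ^ h`. -/
theorem Improves.cost_lt {p : ℤ} (hp : 2 ≤ p) {κ : ℕ → ℤ} (hκ : ∀ i, 0 ≤ κ i)
    (hκ' : ∀ i, κ i ≤ p - 1) {ρ w w' : ℕ → ZMod f → ℤ} {d N h : ℕ} (hh : h ≤ N)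
    (hv : Valid p ρ w d) (hK : ∀ l, cumType p ρ w d l ≤ digitCount κ N l)
    (hi : Improves p ρ w w' d (digitCount κ h)) :
    Valid p ρ w' d ∧ (∀ l, cumType p ρ w' d l ≤ digitCount κ N l) ∧
    segVal p κ N (cumType p ρ w' d) < segVal p κ N (cumType p ρ w d) ∧
    ∑ j ∈ Finset.range d, segVal p κ N (cumType p ρ w' (j + 1)) <
      ∑ j ∈ Finset.range d, segVal p κ N (cumType p ρ w (j + 1)) := by
  obtain ⟨hv', c, j₀, hj₀, hlow, hhigh⟩ := hi
  set lo : ℕ → ℤ := fun j => ∑ i ∈ Finset.range h, seg κ (cumType p ρ w j) i * p ^ i with hlo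
  have hlo0 : ∀ j, 0 ≤ lo j := fun j => Finset.sum_nonneg fun i _ =>
    mul_nonneg (seg_nonneg _ _ _) (by positivity)
  have hstep1 : ∀ j, 1 ≤ j → j ≤ j₀ → segVal p κ N (cumType p ρ w' j) ≤
      segVal p κ N (cumType p ρ w j) + lo (j + 1) - lo j := by
    intro j h1 h2
    rw [segVal_split hh, segVal_split hh]
    have h3 := hi_le hp hκ (N := N) (fun l => (hlow j h1 h2 l).trans
      (max_le_max le_rfl (min_le_right _ _)))
    have h4 : ∑ i ∈ Finset.range h, seg κ (cumType p ρ w' j) i * p ^ i ≤ lo (j + 1) :=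
      Finset.sum_le_sum fun i _ => mul_le_mul_of_nonneg_right (seg_mono (fun l =>
        (hlow j h1 h2 l).trans (max_le (cumType_mono hv (by omega) (by omega) l)
          (min_le_left _ _))) i) (by positivity)
    linarith
  have hstep2 : ∀ j, j₀ < j → j ≤ d → segVal p κ N (cumType p ρ w' j) + 1 ≤
      segVal p κ N (cumType p ρ w j) - lo j := by
    intro j h1 h2
    obtain ⟨h3, h4, h5⟩ := hhigh j h1 h2
    rw [segVal_split hh, segVal_split hh]
    have h6 := hi_lt hp hκ hh (cumType_nonneg hv h2) (cumType_nonneg hv' h2)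
      (fun l => (cumType_mono hv h2 le_rfl l).trans (hK l)) h3 c h4 h5
    have h7 := sum_digits_lt hp (s := seg κ (cumType p ρ w' j))
      (fun i => (seg_le hκ _ i).trans (hκ' i)) h
    linarith
  refine ⟨hv', fun l => ((hhigh d hj₀ le_rfl).1 l).trans
    (max_le (hK l) (digitCount_mono hκ hh l)), ?_, ?_⟩
  · linarith [hstep2 d hj₀ le_rfl, hlo0 d]
  · have key : ∀ n ≤ d, ∑ j ∈ Finset.range n, segVal p κ N (cumType p ρ w' (j + 1)) ≤
        ∑ j ∈ Finset.range n, segVal p κ N (cumType p ρ w (j + 1)) +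
          if n ≤ j₀ then lo (n + 1) else -1 := by
      intro n
      induction n with
      | zero => intro _; simp [hlo0]
      | succ n ih =>
        intro hn
        have ih := ih (by omega)
        rw [Finset.sum_range_succ, Finset.sum_range_succ]
        by_cases h1 : n + 1 ≤ j₀
        · rw [if_pos h1]
          rw [if_pos (by omega)] at ih
          linarith [hstep1 (n + 1) (by omega) h1]
        · rw [if_neg h1]
          have h2 := hstep2 (n + 1) (by omega) hn
          have h3 := hlo0 (n + 1)
          split_ifs at ih <;> linarith
    have := key d le_rfl
    rw [if_neg (by omega)] at this
    linarith

/-- Among all ways to choose digits `s ≤ κ` of a given type, the greedy filling has the least value. -/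
theorem segVal_le_of_digits {p : ℤ} (hp : 2 ≤ p) {κ : ℕ → ℤ} (hκ : ∀ i, 0 ≤ κ i)
    {s : ℕ → ℤ} (hs : ∀ i, 0 ≤ s i) (hsκ : ∀ i, s i ≤ κ i) {N : ℕ} :
    segVal p κ N (digitCount s N : ZMod f → ℤ) ≤ ∑ i ∈ Finset.range N, s i * p ^ i := by
  set Y : ZMod f → ℤ := digitCount s N with hY
  have htot : ∀ (t : ℕ → ℤ) (h : ℕ), ∑ i ∈ Finset.range h, t i = ∑ l : ZMod f, digitCount t h l := by
    intro t h
    simp only [digitCount]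
    rw [Finset.sum_comm]
    simp
  have hY0 : ∀ l, 0 ≤ Y l := digitCount_nonneg hs N
  have hgap : ∀ h ≤ N, ∀ l : ZMod f, digitCount s h l ≤ digitCount (seg κ Y) h l := by
    intro h hh l
    rw [digitCount_seg hκ hY0]
    refine le_min (digitCount_mono hs hh l) (Finset.sum_le_sum fun i _ => ?_)
    split_ifs; exacts [hsκ i, le_rfl]
  have hG : ∀ h ≤ N, 0 ≤ ∑ i ∈ Finset.range h, (seg κ Y i - s i) := by
    intro h hh
    rw [Finset.sum_sub_distrib, htot, htot, ← Finset.sum_sub_distrib]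
    exact Finset.sum_nonneg fun l _ => by linarith [hgap h hh l]
  have key : ∀ h ≤ N, ∑ i ∈ Finset.range h, (seg κ Y i - s i) * p ^ i ≤
      (∑ i ∈ Finset.range h, (seg κ Y i - s i)) * p ^ h := by
    intro h
    induction h with
    | zero => intro _; simp
    | succ h ih =>
      intro hh
      have h1 := ih (by omega)
      have h2 := hG (h + 1) hh
      rw [Finset.sum_range_succ]
      have h3 : (∑ i ∈ Finset.range (h + 1), (seg κ Y i - s i)) * p ^ h ≤
          (∑ i ∈ Finset.range (h + 1), (seg κ Y i - s i)) * p ^ (h + 1) :=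
        mul_le_mul_of_nonneg_left (pow_le_pow_right₀ (by linarith) (by omega)) h2
      have h4 : (∑ i ∈ Finset.range (h + 1), (seg κ Y i - s i)) * p ^ h =
        (∑ i ∈ Finset.range h, (seg κ Y i - s i)) * p ^ h + (seg κ Y h - s h) * p ^ h := by
        rw [Finset.sum_range_succ]; ring
      linarith
  have h0 : ∑ i ∈ Finset.range N, (seg κ Y i - s i) = 0 := by
    rw [Finset.sum_sub_distrib, htot, htot, ← Finset.sum_sub_distrib]
    refine Finset.sum_eq_zero fun l _ => ?_
    rw [digitCount_seg hκ hY0, min_eq_left, hY, sub_self]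
    refine Finset.sum_le_sum fun i _ => ?_
    split_ifs; exacts [hsκ i, le_rfl]
  have h1 := key N le_rfl
  rw [h0, zero_mul] at h1
  simp only [sub_mul, Finset.sum_sub_distrib] at h1
  simp only [segVal]
  linarith

/-- The family `w` has the least total greedy cost among the families that fit into the digits `κ`
and have a smaller last cut. The competitors are restricted to those because only they are
guaranteed to leave a nonempty last bin. -/
def MinCost (p : ℤ) (κ : ℕ → ℤ) (N : ℕ) (ρ w : ℕ → ZMod f → ℤ) (d : ℕ) : Prop :=
  Valid p ρ w d ∧ (∀ l, cumType p ρ w d l ≤ digitCount κ N l) ∧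
  ∀ w', Valid p ρ w' d → (∀ l, cumType p ρ w' d l ≤ digitCount κ N l) →
    segVal p κ N (cumType p ρ w' d) < segVal p κ N (cumType p ρ w d) →
    ∑ j ∈ Finset.range d, segVal p κ N (cumType p ρ w (j + 1)) ≤
      ∑ j ∈ Finset.range d, segVal p κ N (cumType p ρ w' (j + 1))

theorem MinCost.not_improves {p : ℤ} (hp : 2 ≤ p) {κ : ℕ → ℤ} (hκ : ∀ i, 0 ≤ κ i)
    (hκ' : ∀ i, κ i ≤ p - 1) {ρ w : ℕ → ZMod f → ℤ} {d N h : ℕ} (hm : MinCost p κ N ρ w d)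
    (hh : h ≤ N) : ¬ ∃ w', Improves p ρ w w' d (digitCount κ h) := by
  rintro ⟨w', hi⟩
  obtain ⟨h1, h2, h3, h4⟩ := hi.cost_lt hp hκ hκ' hh hm.1 hm.2.1
  exact absurd (hm.2.2 w' h1 h2 h3) (not_le.mpr h4)

/-- A family of minimal cost whose carries vanish jointly at some class has the smallest last cut.
Otherwise compare at the highest level where the two greedy fillings of the last cut differ, and
exchange there. -/
theorem MinCost.segVal_le {p : ℤ} (hp : 2 ≤ p) {κ : ℕ → ℤ} (hκ : ∀ i, 0 ≤ κ i)
    (hκ' : ∀ i, κ i ≤ p - 1) {ρ w C : ℕ → ZMod f → ℤ} {d N : ℕ}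
    (hρ : ∀ b l, 0 ≤ ρ b l) (hρ' : ∀ b l, 1 ≤ b → p - 1 ≤ ρ b l)
    (hm : MinCost p κ N ρ w d) (hz : ∃ z, ∑ b ∈ Finset.range d, w b z = 0)
    (hC : Valid p ρ C d) (hCK : ∀ l, cumType p ρ C d l ≤ digitCount κ N l) :
    segVal p κ N (cumType p ρ w d) ≤ segVal p κ N (cumType p ρ C d) := by
  by_contra! hlt
  set Y := cumType p ρ w d with hY
  set Y' := cumType p ρ C d with hY'
  have hY0 : ∀ l, 0 ≤ Y l := cumType_nonneg hm.1 le_rfl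
  have hY0' : ∀ l, 0 ≤ Y' l := cumType_nonneg hC le_rfl
  obtain ⟨h, hh, hne, htop⟩ := exists_top (P := fun i => seg κ Y' i ≠ seg κ Y i) (d := N) (by
    by_contra! hcon
    refine hlt.ne (Finset.sum_congr rfl fun i hi => ?_)
    rw [hcon i (Finset.mem_range.mp hi)])
  simp only [not_not] at htop
  have hsplit : ∀ Y : ZMod f → ℤ, segVal p κ N Y = ∑ i ∈ Finset.range h, seg κ Y i * p ^ i +
      seg κ Y h * p ^ h + ∑ i ∈ Finset.Ico (h + 1) N, seg κ Y i * p ^ i := by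
    intro Y
    rw [segVal_split (show h + 1 ≤ N by omega), Finset.sum_range_succ]
  have hsame : ∑ i ∈ Finset.Ico (h + 1) N, seg κ Y' i * p ^ i =
      ∑ i ∈ Finset.Ico (h + 1) N, seg κ Y i * p ^ i :=
    Finset.sum_congr rfl fun i hi => by
      have := Finset.mem_Ico.mp hi
      rw [htop i (by omega) (by omega)]
  have hless : seg κ Y' h < seg κ Y h := by
    by_contra! hge
    have h1 : seg κ Y h + 1 ≤ seg κ Y' h := by omega
    have h2 := mul_le_mul_of_nonneg_right h1 (show 0 ≤ p ^ h by positivity)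
    have h3 := sum_digits_lt hp (s := seg κ Y) (fun i => (seg_le hκ _ i).trans (hκ' i)) h
    have h4 : 0 ≤ ∑ i ∈ Finset.range h, seg κ Y' i * p ^ i :=
      Finset.sum_nonneg fun i _ => mul_nonneg (seg_nonneg _ _ _) (by positivity)
    rw [hsplit, hsplit, hsame] at hlt
    linarith
  -- compare the parts of the two types above level `h`
  have hrest : ∀ l : ZMod f, ∀ Y : ZMod f → ℤ, (∀ l, 0 ≤ Y l) → (∀ l, Y l ≤ digitCount κ N l) →
      Y l = min (Y l) (digitCount κ h l) +
        ((if (h : ZMod f) = l then seg κ Y h else 0) +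
        ∑ i ∈ Finset.Ico (h + 1) N, if (i : ZMod f) = l then seg κ Y i else 0) := by
    intro l Y h0 hK
    have h1 := digitCount_add_Ico (seg κ Y) hh.le l
    rw [digitCount_seg hκ h0, digitCount_seg hκ h0, min_eq_left (hK l),
      Finset.sum_eq_sum_Ico_succ_bot hh] at h1
    exact h1
  have hsame' : ∀ l : ZMod f,
      (∑ i ∈ Finset.Ico (h + 1) N, if (i : ZMod f) = l then seg κ Y' i else 0) =
      ∑ i ∈ Finset.Ico (h + 1) N, if (i : ZMod f) = l then seg κ Y i else 0 := fun l =>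
    Finset.sum_congr rfl fun i hi => by
      have := Finset.mem_Ico.mp hi
      rw [htop i (by omega) (by omega)]
  have hZc : digitCount κ h (h : ZMod f) < Y h := by
    have := seg_nonneg κ Y' h
    have h2 : 0 < seg κ Y h := by omega
    simp only [seg] at h2
    omega
  refine hm.not_improves hp hκ hκ' hh.le (exists_improves_of_lower hp hρ hρ' hm.1 hC
    (digitCount_nonneg hκ h) hz (h : ZMod f) ?_ hZc ?_)
  · have h1 := hrest h Y hY0 hm.2.1
    have h2 := hrest h Y' hY0' hCK
    rw [hsame', if_pos rfl] at h2
    rw [if_pos rfl] at h1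
    change Y' h < Y h
    omega
  · intro l
    have h1 := hrest l Y hY0 hm.2.1
    have h2 := hrest l Y' hY0' hCK
    rw [hsame'] at h2
    have h3 : (if (h : ZMod f) = l then seg κ Y' h else 0) ≤
        if (h : ZMod f) = l then seg κ Y h else 0 := by
      split_ifs; exacts [hless.le, le_rfl]
    change Y' l ≤ max (Y l) _
    omega

/-- Inductive step for the common zero of the carries. Otherwise the exchange is possible either inside
the last bin, or around the circle with the threshold at the highest level used by the last cut. -/
theorem MinCost.exists_zero {p : ℤ} (hp : 2 ≤ p) {κ : ℕ → ℤ} (hκ : ∀ i, 0 ≤ κ i)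
    (hκ' : ∀ i, κ i ≤ p - 1) {ρ w : ℕ → ZMod f → ℤ} {d N : ℕ}
    (hρ : ∀ b l, 0 ≤ ρ b l) (hρ' : ∀ b l, 1 ≤ b → p - 1 ≤ ρ b l)
    (hm : MinCost p κ N ρ w (d + 1)) (hz : ∃ z, ∑ b ∈ Finset.range d, w b z = 0) :
    ∃ z, ∑ b ∈ Finset.range (d + 1), w b z = 0 := by
  by_contra! hcon
  have hW : ∀ l, 1 ≤ ∑ b ∈ Finset.range (d + 1), w b l := by
    intro l
    have := hcon l
    have : 0 ≤ ∑ b ∈ Finset.range (d + 1), w b l :=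
      Finset.sum_nonneg fun b hb => (hm.1 b (Finset.mem_range.mp hb) l).1
    omega
  obtain ⟨l₀, hl₀⟩ := hz
  by_cases hfull : ∀ l, 1 ≤ w d l
  · refine hm.not_improves hp hκ hκ' (Nat.zero_le N) ?_
    convert exists_improves_of_full_bin hp hρ hm.1 hfull using 3
    funext l
    simp [digitCount]
  push Not at hfull
  obtain ⟨z, hz⟩ := hfull
  have hz0 : w d z = 0 := by have := (hm.1 d (by omega) z).1; omega
  set Y := cumType p ρ w (d + 1) with hY
  have hY0 : ∀ l, 0 ≤ Y l := cumType_nonneg hm.1 le_rfl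
  have hYpos : 0 < ∑ l, Y l := by
    have hsh : ∀ b, ∑ l, w b (l + 1) = ∑ l, w b l := fun b =>
      Equiv.sum_comp (Equiv.addRight (1 : ZMod f)) (w b)
    have h1 : ∑ l, Y l = ∑ l, ∑ b ∈ Finset.range (d + 1), ρ b l +
        (p - 1) * ∑ l, ∑ b ∈ Finset.range (d + 1), w b l := by
      simp only [hY, cumType_eq, Finset.sum_sub_distrib, Finset.sum_add_distrib,
        ← Finset.mul_sum]
      rw [Finset.sum_comm (f := fun l b => w b (l + 1)), Finset.sum_comm (f := fun l b => w b l)]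
      simp only [hsh]
      ring
    have h2 : 0 < ∑ l : ZMod f, ∑ b ∈ Finset.range (d + 1), w b l :=
      Finset.sum_pos (fun l _ => hW l) ⟨0, by simp⟩
    have h3 : 0 ≤ ∑ l, ∑ b ∈ Finset.range (d + 1), ρ b l :=
      Finset.sum_nonneg fun l _ => Finset.sum_nonneg fun b _ => hρ b l
    rw [h1]
    have := mul_pos (show 0 < p - 1 by linarith) h2
    linarith
  have hrest : ∀ h ≤ N, ∀ l : ZMod f,
      Y l = min (Y l) (digitCount κ h l) +
        ∑ i ∈ Finset.Ico h N, if (i : ZMod f) = l then seg κ Y i else 0 := by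
    intro h hh l
    have h1 := digitCount_add_Ico (seg κ Y) hh l
    rwa [digitCount_seg hκ hY0, digitCount_seg hκ hY0, min_eq_left (hm.2.1 l)] at h1
  -- the highest level occurring in the last cut
  obtain ⟨h, hh, hne, htop⟩ := exists_top (P := fun i => seg κ Y i ≠ 0) (d := N) (by
    by_contra! hc
    refine hYpos.ne' (Finset.sum_eq_zero fun l _ => ?_)
    have h1 := hrest 0 (Nat.zero_le N) l
    rw [Finset.sum_eq_zero (fun i hi => by rw [hc i (Finset.mem_Ico.mp hi).2]; simp)] at h1
    have : digitCount κ 0 l = 0 := by simp [digitCount]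
    have := hY0 l
    omega)
  simp only [not_not] at htop
  have hrest' : ∀ l : ZMod f, Y l = min (Y l) (digitCount κ h l) +
      if (h : ZMod f) = l then seg κ Y h else 0 := by
    intro l
    have h1 := hrest h hh.le l
    rw [Finset.sum_eq_sum_Ico_succ_bot hh, Finset.sum_eq_zero (s := Finset.Ico (h + 1) N)
      (fun i hi => by
        have := Finset.mem_Ico.mp hi
        rw [htop i (by omega) (by omega)]; simp), add_zero] at h1
    exact h1
  refine hm.not_improves hp hκ hκ' hh.le (exists_improves_of_circle hp hρ hρ' hm.1
    (digitCount_nonneg hκ h) hl₀ hW ⟨z, hz0⟩ (h : ZMod f) ?_ ?_)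
  · change _ < Y h
    have h1 := hrest' h
    rw [if_pos rfl] at h1
    have := seg_nonneg κ Y h
    omega
  · intro l
    change Y l ≤ _
    have h1 := hrest' l
    have h2 := seg_le hκ Y h
    have h3 := hκ' h
    have := hκ h
    split_ifs at h1 <;> omega

end ModestWeight

/-! ### Base-`p` digits and cyclic residues -/

namespace ModestWeight

variable {f : ℕ} [NeZero f]

/-- The `h`-th base-`p` digit of `n`. -/
def dig (p n h : ℕ) : ℕ := n / p ^ h % p

theorem dig_lt {p : ℕ} (hp : 2 ≤ p) (n h : ℕ) : dig p n h < p := Nat.mod_lt _ (by omega)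

theorem dig_eq_zero {p n h : ℕ} (hn : n < p ^ h) : dig p n h = 0 := by
  simp [dig, Nat.div_eq_of_lt hn]

theorem sum_dig {p N n : ℕ} (hn : n < p ^ N) :
    ∑ h ∈ Finset.range N, dig p n h * p ^ h = n := by
  have key : ∀ N, ∑ h ∈ Finset.range N, dig p n h * p ^ h = n % p ^ N := by
    intro N
    induction N with
    | zero => simp [Nat.mod_one]
    | succ N ih => rw [Finset.sum_range_succ, ih, Nat.mod_pow_succ, dig]; ring
  rw [key, Nat.mod_eq_of_lt hn]

theorem sum_lt_pow {p : ℕ} {t : ℕ → ℕ} (ht : ∀ i, t i < p) (N : ℕ) :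
    ∑ i ∈ Finset.range N, t i * p ^ i < p ^ N := by
  induction N with
  | zero => simp
  | succ N ih =>
    rw [Finset.sum_range_succ, pow_succ]
    have := Nat.mul_le_mul_right (p ^ N) (Nat.succ_le_of_lt (ht N))
    rw [Nat.succ_mul] at this
    linarith

theorem dig_sum_pow {p : ℕ} (hp : 2 ≤ p) {t : ℕ → ℕ} (ht : ∀ i, t i < p) (N h : ℕ) :
    dig p (∑ i ∈ Finset.range N, t i * p ^ i) h = if h < N then t h else 0 := by
  split_ifs with hN
  · have hsplit : ∑ i ∈ Finset.range N, t i * p ^ i =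
        ∑ i ∈ Finset.range h, t i * p ^ i +
          p ^ h * (t h + p * ∑ i ∈ Finset.Ico (h + 1) N, t i * p ^ (i - (h + 1))) := by
      rw [← Finset.sum_range_add_sum_Ico _ hN.le, Finset.sum_eq_sum_Ico_succ_bot hN, mul_add,
        ← mul_assoc, Finset.mul_sum]
      congr 1
      congr 1
      · ring
      · refine Finset.sum_congr rfl fun i hi => ?_
        have := Finset.mem_Ico.mp hi
        rw [show p ^ i = p ^ (i - (h + 1)) * p ^ (h + 1) by rw [← pow_add]; congr 1; omega]
        ring
    rw [dig, hsplit, Nat.add_mul_div_left _ _ (by positivity),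
      Nat.div_eq_of_lt (sum_lt_pow ht h), zero_add, Nat.add_mul_mod_self_left,
      Nat.mod_eq_of_lt (ht h)]
  · exact dig_eq_zero ((sum_lt_pow ht N).trans_le (Nat.pow_le_pow_right (by omega) (by omega)))

/-- The value `∑ x i * p ^ ((i - l) mod f)` of the type `x` read cyclically from class `l`. For the type
of a number `n` it is congruent to `p ^ (-l) * n` modulo `p ^ f - 1`. -/
def cyc (p : ℤ) (x : ZMod f → ℤ) (l : ZMod f) : ℤ := ∑ i, x i * p ^ (i - l).val

theorem mul_pow_val (p : ℤ) (i l : ZMod f) :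
    p * p ^ (i - (l + 1)).val = p ^ (i - l).val + if i = l then p ^ f - 1 else 0 := by
  have hf := NeZero.pos f
  split_ifs with h
  · subst h
    rw [show i - (i + 1) = ((f - 1 : ℕ) : ZMod f) by rw [Nat.cast_sub hf]; simp,
      ZMod.val_natCast, Nat.mod_eq_of_lt (by omega), sub_self, ZMod.val_zero, ← pow_succ',
      Nat.sub_add_cancel hf]
    ring
  · have h1 : (i - l).val ≠ 0 := by
      rw [Ne, ZMod.val_eq_zero, sub_eq_zero]; exact h
    have h2 : i - (l + 1) = (((i - l).val - 1 : ℕ) : ZMod f) := by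
      rw [Nat.cast_sub (by omega), ZMod.natCast_zmod_val]; push_cast; ring
    have h3 := ZMod.val_lt (i - l)
    rw [h2, ZMod.val_natCast, Nat.mod_eq_of_lt (by omega), ← pow_succ',
      Nat.sub_add_cancel (by omega), add_zero]

theorem cyc_step (p : ℤ) (x : ZMod f → ℤ) (l : ZMod f) :
    p * cyc p x (l + 1) - cyc p x l = (p ^ f - 1) * x l := by
  have : p * cyc p x (l + 1) = cyc p x l + (p ^ f - 1) * x l := by
    simp only [cyc, Finset.mul_sum]
    rw [Finset.sum_congr rfl (fun i _ => show p * (x i * p ^ (i - (l + 1)).val) =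
      x i * p ^ (i - l).val + x i * (if i = l then p ^ f - 1 else 0) by
        rw [← mul_add, ← mul_pow_val]; ring), Finset.sum_add_distrib]
    simp [mul_comm]
  linarith

theorem cyc_shift (p : ℤ) (w : ZMod f → ℤ) :
    (p ^ f - 1) ∣ cyc p (fun l => p * w (l + 1) - w l) 0 := by
  refine ⟨w 0, ?_⟩
  have h1 : ∑ i : ZMod f, p * w (i + 1) * p ^ (i - 0).val =
      ∑ i : ZMod f, w i * (p * p ^ (i - (0 + 1)).val) := by
    rw [← Equiv.sum_comp (Equiv.addRight (1 : ZMod f))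
      (fun i => w i * (p * p ^ (i - (0 + 1)).val))]
    refine Finset.sum_congr rfl fun i _ => ?_
    simp only [Equiv.coe_addRight, zero_add, sub_zero, add_sub_cancel_right]
    ring
  simp only [cyc, sub_mul, Finset.sum_sub_distrib]
  rw [h1]
  simp only [mul_pow_val, mul_add, Finset.sum_add_distrib]
  simp only [mul_ite, mul_zero, Finset.sum_ite_eq', Finset.mem_univ, if_true]
  ring

theorem cyc_digitCount_modEq (p : ℤ) (s : ℕ → ℤ) (N : ℕ) :
    cyc p (digitCount s N : ZMod f → ℤ) 0 ≡ ∑ i ∈ Finset.range N, s i * p ^ i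
      [ZMOD (p ^ f - 1)] := by
  have h1 : cyc p (digitCount s N : ZMod f → ℤ) 0 =
      ∑ i ∈ Finset.range N, s i * p ^ (i : ZMod f).val := by
    simp only [cyc, digitCount, Finset.sum_mul]
    rw [Finset.sum_comm]
    refine Finset.sum_congr rfl fun i _ => ?_
    simp [ite_mul]
  rw [h1]
  refine Int.ModEq.sum fun i _ => Int.ModEq.mul_left _ ?_
  rw [ZMod.val_natCast]
  conv_rhs => rw [← Nat.mod_add_div i f, pow_add, pow_mul]
  have h2 : p ^ f ≡ 1 [ZMOD (p ^ f - 1)] := (Int.modEq_iff_dvd.mpr dvd_rfl).symm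
  simpa using ((h2.pow (i / f)).mul_left (p ^ (i % f))).symm

/-- Congruence modulo `p ^ f - 1` at class `0` propagates to every class. -/
theorem cyc_dvd {p : ℤ} {x y : ZMod f → ℤ} (h0 : (p ^ f - 1) ∣ cyc p x 0 - cyc p y 0)
    (l : ZMod f) : (p ^ f - 1) ∣ cyc p x l - cyc p y l := by
  have := circle_induction (P := fun l => (p ^ f - 1) ∣ cyc p x (-l) - cyc p y (-l)) 0
    (by simpa using h0) (by
      intro l hl
      have h1 := cyc_step p x (-(l + 1))
      have h2 := cyc_step p y (-(l + 1))
      rw [show -(l + 1) + 1 = -l by ring] at h1 h2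
      have : cyc p x (-(l + 1)) - cyc p y (-(l + 1)) =
          p * (cyc p x (-l) - cyc p y (-l)) - (p ^ f - 1) * (x (-(l + 1)) - y (-(l + 1))) := by
        linarith
      rw [this]
      exact dvd_sub (hl.mul_left _) (dvd_mul_right _ _)) (-l)
  simpa using this

end ModestWeight

/-! ### Tuples without carrying as families of bins -/

namespace ModestWeight

/-- Membership in `U_d(k)` for sequences; only the entries `0, …, d` matter. -/
def IsU (p q d k : ℕ) (m : ℕ → ℕ) : Prop :=
  (∑ b ∈ Finset.range (d + 1), m b = k) ∧
  (∀ h, ∑ b ∈ Finset.range (d + 1), dig p (m b) h = dig p k h) ∧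
  ∀ b, 1 ≤ b → b ≤ d → 0 < m b ∧ (q - 1) ∣ m b

/-- The weight of a tuple, written as the sum of its proper partial sums `m_0 + ⋯ + m_j`, `j < d`. -/
def cutSum (d : ℕ) (m : ℕ → ℕ) : ℕ := ∑ j ∈ Finset.range d, ∑ b ∈ Finset.range (j + 1), m b

/-- `m` has minimal weight in `U_d(k)`. -/
def IsMin (p q d k : ℕ) (m : ℕ → ℕ) : Prop :=
  IsU p q d k m ∧ ∀ m', IsU p q d k m' → cutSum d m ≤ cutSum d m'

section

variable {f : ℕ} [NeZero f]

/-- The number of base-`p` digits of `n`, with multiplicity, in each class modulo `f`. -/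
def numType (p N n : ℕ) : ZMod f → ℤ := digitCount (fun h => (dig p n h : ℤ)) N

/-- The carry vector of the number `n` placed in bin `b`. For `b ≥ 1` the bin holds a positive multiple
of `p ^ f - 1`, so the quotient is at least `1` and is normalised by subtracting `1`. -/
def numW (p N b n : ℕ) (l : ZMod f) : ℤ :=
  cyc p (numType p N n) l / ((p : ℤ) ^ f - 1) - if b = 0 then 0 else 1

/-- The base types of the bins: constant `p - 1` for `b ≥ 1`, and for `b = 0` the type determined by
the residue of `k` modulo `p ^ f - 1` (`numRho_congr`). -/
def numRho (p N k b : ℕ) (l : ZMod f) : ℤ :=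
  if b = 0 then numType p N k l - p * (cyc p (numType p N k) (l + 1) / ((p : ℤ) ^ f - 1)) +
    cyc p (numType p N k) l / ((p : ℤ) ^ f - 1) else p - 1

theorem q_sub_one_pos {p : ℕ} (hp : 2 ≤ p) : 0 < (p : ℤ) ^ f - 1 := by
  have : (1 : ℤ) < (p : ℤ) ^ f := one_lt_pow₀ (by exact_mod_cast hp) (NeZero.ne f)
  linarith

theorem q_cast {p : ℕ} (hp : 2 ≤ p) : ((p ^ f - 1 : ℕ) : ℤ) = (p : ℤ) ^ f - 1 := by
  rw [Nat.cast_sub (Nat.one_le_pow _ _ (by omega))]; push_cast; rfl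

theorem numType_nonneg (p N n : ℕ) (l : ZMod f) : 0 ≤ numType p N n l :=
  digitCount_nonneg (fun _ => Int.natCast_nonneg _) N l

theorem cyc_nonneg {p : ℕ} {x : ZMod f → ℤ} (hx : ∀ l, 0 ≤ x l) (l : ZMod f) :
    0 ≤ cyc p x l := Finset.sum_nonneg fun i _ => mul_nonneg (hx i) (by positivity)

theorem cyc_numType_modEq {p N n : ℕ} (hn : n < p ^ N) :
    cyc p (numType p N n : ZMod f → ℤ) 0 ≡ n [ZMOD ((p : ℤ) ^ f - 1)] := by
  have h := cyc_digitCount_modEq (f := f) (p : ℤ) (fun h => (dig p n h : ℤ)) N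
  have h2 : ∑ i ∈ Finset.range N, (dig p n i : ℤ) * (p : ℤ) ^ i = n := by
    exact_mod_cast sum_dig hn
  rw [h2] at h
  exact h

theorem cyc_numType_congr {p N n n' : ℕ} (hn : n < p ^ N) (hn' : n' < p ^ N)
    (h : (n : ℤ) ≡ n' [ZMOD ((p : ℤ) ^ f - 1)]) (l : ZMod f) :
    ((p : ℤ) ^ f - 1) ∣ cyc p (numType p N n) l - cyc p (numType p N n') l := by
  apply cyc_dvd
  exact ((((cyc_numType_modEq hn).trans h).trans (cyc_numType_modEq hn').symm).symm).dvd

theorem q_mul_numRho {p N k : ℕ} (l : ZMod f) :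
    ((p : ℤ) ^ f - 1) * numRho p N k 0 l =
      p * (cyc p (numType p N k) (l + 1) % ((p : ℤ) ^ f - 1)) -
        cyc p (numType p N k) l % ((p : ℤ) ^ f - 1) := by
  have h1 := cyc_step (p : ℤ) (numType p N k) l
  have h2 := Int.emod_add_mul_ediv (cyc p (numType p N k) (l + 1)) ((p : ℤ) ^ f - 1)
  have h3 := Int.emod_add_mul_ediv (cyc p (numType p N k) l) ((p : ℤ) ^ f - 1)
  simp only [numRho, if_true]
  rw [mul_add, mul_sub, ← h1]
  linear_combination (-(p : ℤ)) * h2 + h3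

theorem numRho_nonneg {p : ℕ} (hp : 2 ≤ p) (N k b : ℕ) (l : ZMod f) : 0 ≤ numRho p N k b l := by
  have hq := q_sub_one_pos (f := f) hp
  by_cases hb : b = 0
  · subst hb
    have h1 := q_mul_numRho (p := p) (N := N) (k := k) l
    have h2 := Int.emod_nonneg (cyc p (numType p N k) (l + 1)) hq.ne'
    have h3 := Int.emod_lt_of_pos (cyc p (numType p N k) l) hq
    have h4 : 0 ≤ (p : ℤ) * (cyc p (numType p N k) (l + 1) % ((p : ℤ) ^ f - 1)) := by positivity
    by_contra! h
    nlinarith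
  · simp only [numRho, if_neg hb]; have : (2 : ℤ) ≤ p := by exact_mod_cast hp
    linarith

theorem numRho_succ {p N k b : ℕ} (hb : 1 ≤ b) (l : ZMod f) : numRho p N k b l = p - 1 := by
  simp [numRho, show b ≠ 0 by omega]

theorem numRho_congr {p N n k : ℕ} (hp : 2 ≤ p) (hn : n < p ^ N) (hk : k < p ^ N)
    (h : (n : ℤ) ≡ k [ZMOD ((p : ℤ) ^ f - 1)]) (l : ZMod f) :
    numRho p N n 0 l = numRho p N k 0 l := by
  have hq := q_sub_one_pos (f := f) hp
  apply mul_left_cancel₀ hq.ne'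
  rw [q_mul_numRho, q_mul_numRho]
  have h1 := cyc_numType_congr hn hk h l
  have h2 := cyc_numType_congr hn hk h (l + 1)
  rw [Int.emod_eq_emod_iff_emod_sub_eq_zero.mpr (Int.emod_eq_zero_of_dvd h1),
    Int.emod_eq_emod_iff_emod_sub_eq_zero.mpr (Int.emod_eq_zero_of_dvd h2)]

theorem binType_zero {p N n k : ℕ} (hp : 2 ≤ p) (hn : n < p ^ N) (hk : k < p ^ N)
    (h : (n : ℤ) ≡ k [ZMOD ((p : ℤ) ^ f - 1)]) (l : ZMod f) :
    binType p (numRho p N k 0) (numW p N 0 n) l = numType p N n l := by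
  rw [binType, ← numRho_congr hp hn hk h]
  simp only [numRho, numW, if_true]
  ring

theorem cyc_pos {p N n : ℕ} (hp : 2 ≤ p) (hn : n < p ^ N) (h0 : 0 < n) (l : ZMod f) :
    0 < cyc p (numType p N n) l := by
  obtain ⟨h, hh, hne⟩ : ∃ h < N, dig p n h ≠ 0 := by
    by_contra! hcon
    rw [← sum_dig hn, Finset.sum_eq_zero] at h0
    · omega
    · intro i hi; rw [hcon i (Finset.mem_range.mp hi), zero_mul]
  have h1 : 0 < numType p N n (h : ZMod f) := by
    have : (if (h : ZMod f) = (h : ZMod f) then (dig p n h : ℤ) else 0) ≤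
        numType p N n (h : ZMod f) :=
      Finset.single_le_sum (f := fun i : ℕ => if (i : ZMod f) = (h : ZMod f) then (dig p n i : ℤ)
        else 0) (fun i _ => by positivity) (Finset.mem_range.mpr hh)
    rw [if_pos rfl] at this
    omega
  exact Finset.sum_pos' (fun i _ => mul_nonneg (numType_nonneg p N n i) (by positivity))
    ⟨_, Finset.mem_univ _, mul_pos h1 (by positivity)⟩

theorem numW_succ {p N n b : ℕ} (hp : 2 ≤ p) (hn : n < p ^ N) (h0 : 0 < n) (hb : 1 ≤ b)
    (hd : (p ^ f - 1) ∣ n) (l : ZMod f) :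
    ((p : ℤ) ^ f - 1) * (numW p N b n l + 1) = cyc p (numType p N n) l ∧ 0 ≤ numW p N b n l := by
  have hq := q_sub_one_pos (f := f) hp
  have hd' : ((p : ℤ) ^ f - 1) ∣ (n : ℤ) := by
    rw [← q_cast hp]; exact_mod_cast hd
  have h1 : ((p : ℤ) ^ f - 1) ∣ cyc p (numType p N n) l := by
    have := cyc_numType_congr (f := f) hn (n' := 0) (by positivity)
      (by simpa using (Int.modEq_zero_iff_dvd.mpr hd')) l
    have hz : cyc p (numType p N 0) l = 0 := by
      simp [cyc, numType, digitCount, dig]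
    rwa [hz, sub_zero] at this
  obtain ⟨a, ha⟩ := h1
  have h2 := cyc_pos hp hn h0 l
  have h3 : numW p N b n l = a - 1 := by
    simp only [numW, if_neg (show b ≠ 0 by omega), ha]
    rw [Int.mul_ediv_cancel_left _ hq.ne']
  rw [h3, ha]
  refine ⟨by ring, ?_⟩
  rw [ha] at h2
  have := pos_of_mul_pos_right h2 hq.le
  omega

theorem binType_succ {p N n k b : ℕ} (hp : 2 ≤ p) (hn : n < p ^ N) (h0 : 0 < n) (hb : 1 ≤ b)
    (hd : (p ^ f - 1) ∣ n) (l : ZMod f) :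
    binType p (numRho p N k b) (numW p N b n) l = numType p N n l := by
  have hq := q_sub_one_pos (f := f) hp
  apply mul_left_cancel₀ hq.ne'
  have h1 := (numW_succ hp hn h0 hb hd l).1
  have h2 := (numW_succ hp hn h0 hb hd (l + 1)).1
  have h3 := cyc_step (p : ℤ) (numType p N n) l
  rw [← h1, ← h2] at h3
  rw [← h3, binType, numRho_succ hb]
  ring

end

theorem IsU.lt_pow {p q d k N : ℕ} {m : ℕ → ℕ} (hm : IsU p q d k m) (hk : k < p ^ N) {b : ℕ}
    (hb : b ≤ d) : m b < p ^ N := by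
  have : m b ≤ ∑ b ∈ Finset.range (d + 1), m b :=
    Finset.single_le_sum (fun _ _ => Nat.zero_le _) (Finset.mem_range.mpr (by omega))
  rw [hm.1] at this
  omega

theorem IsU.modEq {p f d k : ℕ} [NeZero f] (hp : 2 ≤ p) {m : ℕ → ℕ}
    (hm : IsU p (p ^ f) d k m) : (m 0 : ℤ) ≡ k [ZMOD ((p : ℤ) ^ f - 1)] := by
  rw [Int.modEq_iff_dvd, ← q_cast hp]
  have h1 := hm.1
  rw [Finset.sum_range_succ'] at h1
  have h2 : (k : ℤ) - m 0 = ((∑ i ∈ Finset.range d, m (i + 1) : ℕ) : ℤ) := by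
    rw [← h1]; push_cast; ring
  rw [h2]
  exact Int.natCast_dvd_natCast.mpr (Finset.dvd_sum fun i hi =>
    (hm.2.2 (i + 1) (by omega) (by have := Finset.mem_range.mp hi; omega)).2)

section
variable {f : ℕ} [NeZero f]

theorem IsU.binType_eq {p d k N : ℕ} (hp : 2 ≤ p) {m : ℕ → ℕ}
    (hm : IsU p (p ^ f) d k m) (hk : k < p ^ N) {b : ℕ} (hb : b ≤ d) (l : ZMod f) :
    0 ≤ numW p N b (m b) l ∧
    binType p (numRho p N k b) (numW p N b (m b)) l = numType p N (m b) l := by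
  by_cases h : b = 0
  · subst h
    refine ⟨?_, binType_zero hp (hm.lt_pow hk hb) hk (hm.modEq hp) l⟩
    simp only [numW, if_true, sub_zero]
    exact Int.ediv_nonneg (cyc_nonneg (numType_nonneg _ _ _) l) (q_sub_one_pos hp).le
  · have h2 := hm.2.2 b (by omega) hb
    exact ⟨(numW_succ hp (hm.lt_pow hk hb) h2.1 (by omega) h2.2 l).2,
      binType_succ hp (hm.lt_pow hk hb) h2.1 (by omega) h2.2 l⟩

theorem IsU.valid {p d k N : ℕ} (hp : 2 ≤ p) {m : ℕ → ℕ}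
    (hm : IsU p (p ^ f) d k m) (hk : k < p ^ N) :
    Valid (f := f) p (numRho p N k) (fun b => numW p N b (m b)) d := by
  intro b hb l
  have := hm.binType_eq hp hk hb.le l
  exact ⟨this.1, by simp only [this.2]; exact numType_nonneg _ _ _ _⟩

theorem IsU.cumType_eq {p d k N : ℕ} (hp : 2 ≤ p) {m : ℕ → ℕ}
    (hm : IsU p (p ^ f) d k m) (hk : k < p ^ N) {j : ℕ} (hj : j ≤ d + 1) :
    cumType (f := f) p (numRho p N k) (fun b => numW p N b (m b)) j =
      digitCount (fun h => ((∑ b ∈ Finset.range j, dig p (m b) h : ℕ) : ℤ)) N := by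
  funext l
  rw [cumType, Finset.sum_congr rfl fun b hb => (hm.binType_eq hp hk
    (by have := Finset.mem_range.mp hb; omega) l).2]
  simp only [numType, digitCount]
  rw [Finset.sum_comm]
  refine Finset.sum_congr rfl fun i _ => ?_
  split_ifs
  · push_cast; rfl
  · simp

theorem IsU.dig_le {p q d k : ℕ} {m : ℕ → ℕ} (hm : IsU p q d k m) {j : ℕ} (hj : j ≤ d + 1)
    (h : ℕ) : ∑ b ∈ Finset.range j, dig p (m b) h ≤ dig p k h := by
  rw [← hm.2.1 h]
  exact Finset.sum_le_sum_of_subset (Finset.range_mono hj)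

theorem IsU.sum_eq {p q d k N : ℕ} {m : ℕ → ℕ} (hm : IsU p q d k m) (hk : k < p ^ N)
    {j : ℕ} (hj : j ≤ d + 1) :
    ∑ h ∈ Finset.range N, (∑ b ∈ Finset.range j, dig p (m b) h) * p ^ h =
      ∑ b ∈ Finset.range j, m b := by
  simp only [Finset.sum_mul]
  rw [Finset.sum_comm]
  refine Finset.sum_congr rfl fun b hb => sum_dig (hm.lt_pow hk ?_)
  have := Finset.mem_range.mp hb; omega

theorem IsU.cumType_le {p d k N : ℕ} (hp : 2 ≤ p) {m : ℕ → ℕ}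
    (hm : IsU p (p ^ f) d k m) (hk : k < p ^ N) {j : ℕ} (hj : j ≤ d + 1) (l : ZMod f) :
    cumType p (numRho p N k) (fun b => numW p N b (m b)) j l ≤
      digitCount (fun h => (dig p k h : ℤ)) N l := by
  rw [hm.cumType_eq hp hk hj]
  refine Finset.sum_le_sum fun i _ => ?_
  split_ifs
  · exact Int.ofNat_le.mpr (hm.dig_le hj i)
  · exact le_rfl

theorem IsU.segVal_le {p d k N : ℕ} (hp : 2 ≤ p) {m : ℕ → ℕ}
    (hm : IsU p (p ^ f) d k m) (hk : k < p ^ N) {j : ℕ} (hj : j ≤ d + 1) :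
    segVal p (fun h => (dig p k h : ℤ)) N
      (cumType (f := f) p (numRho p N k) (fun b => numW p N b (m b)) j) ≤
      ((∑ b ∈ Finset.range j, m b : ℕ) : ℤ) := by
  rw [hm.cumType_eq hp hk hj, ← hm.sum_eq hk hj]
  have := segVal_le_of_digits (f := f) (p := p) (by exact_mod_cast hp)
    (κ := fun h => (dig p k h : ℤ)) (fun _ => Int.natCast_nonneg _)
    (s := fun h => ((∑ b ∈ Finset.range j, dig p (m b) h : ℕ) : ℤ))
    (fun _ => Int.natCast_nonneg _) (fun i => Int.ofNat_le.mpr (hm.dig_le hj i)) (N := N)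
  refine this.trans (le_of_eq ?_)
  push_cast
  rfl

/-- The greedy cuts of a valid family have the residue of `k` modulo `p ^ f - 1`, so that consecutive
cuts differ by multiples of `p ^ f - 1`. -/
theorem segVal_modEq {p d k N : ℕ} (hk : k < p ^ N) {w : ℕ → ZMod f → ℤ}
    (hv : Valid p (numRho p N k) w d)
    (hK : ∀ l, cumType p (numRho p N k) w d l ≤ digitCount (fun h => (dig p k h : ℤ)) N l)
    {j : ℕ} (hj1 : 1 ≤ j) (hj : j ≤ d) :
    segVal p (fun h => (dig p k h : ℤ)) N (cumType p (numRho p N k) w j) ≡ k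
      [ZMOD ((p : ℤ) ^ f - 1)] := by
  set κ : ℕ → ℤ := fun h => (dig p k h : ℤ) with hκ
  have hκ0 : ∀ i, 0 ≤ κ i := fun _ => Int.natCast_nonneg _
  have h1 := cyc_digitCount_modEq (f := f) (p : ℤ) (seg κ (cumType p (numRho p N k) w j)) N
  have h2 : digitCount (seg κ (cumType p (numRho p N k) w j)) N = cumType p (numRho p N k) w j := by
    funext l
    rw [digitCount_seg hκ0 (cumType_nonneg hv hj),
      min_eq_left ((cumType_mono hv hj le_rfl l).trans (hK l))]
  rw [h2] at h1
  refine h1.symm.trans (Int.ModEq.trans ?_ (cyc_numType_modEq (f := f) hk))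
  rw [Int.modEq_iff_dvd]
  -- the type of `k` and that of the cut differ by `p * v (l + 1) - v l`
  set v : ZMod f → ℤ := fun l => cyc p (numType p N k) l / ((p : ℤ) ^ f - 1) -
    ∑ b ∈ Finset.range j, w b l - (j - 1) with hvdef
  have h3 : cyc p (numType p N k) (0 : ZMod f) - cyc p (cumType p (numRho p N k) w j) 0 =
      cyc p (fun l => p * v (l + 1) - v l) 0 := by
    simp only [cyc, ← Finset.sum_sub_distrib, ← sub_mul]
    refine Finset.sum_congr rfl fun l _ => ?_
    congr 1
    rw [ModestWeight.cumType_eq]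
    have h4 : ∑ b ∈ Finset.range j, numRho p N k b l = numRho p N k 0 l + (j - 1) * (p - 1) := by
      obtain ⟨i, rfl⟩ : ∃ i, j = i + 1 := ⟨j - 1, by omega⟩
      rw [Finset.sum_range_succ', Finset.sum_congr rfl fun b _ => numRho_succ (by omega) l]
      simp
      ring
    rw [h4]
    simp only [hvdef, numRho, if_true]
    ring
  rw [h3]
  exact cyc_shift _ _

/-- A valid family that fits into the digits of `k` is realised by a tuple of `U_d(k)` whose cuts are
the greedy ones. The hypothesis on the last cut makes `m_d` positive. -/
theorem exists_isU_of_valid {p d k N : ℕ} (hp : 2 ≤ p) (hk : k < p ^ N) (hd : 1 ≤ d)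
    {w : ℕ → ZMod f → ℤ} (hv : Valid p (numRho p N k) w d)
    (hK : ∀ l, cumType p (numRho p N k) w d l ≤ digitCount (fun h => (dig p k h : ℤ)) N l)
    (hlt : segVal p (fun h => (dig p k h : ℤ)) N (cumType p (numRho p N k) w d) < k) :
    ∃ m, IsU p (p ^ f) d k m ∧ ∀ j ≤ d, ((∑ b ∈ Finset.range j, m b : ℕ) : ℤ) =
      segVal p (fun h => (dig p k h : ℤ)) N (cumType p (numRho p N k) w j) := by
  set κ : ℕ → ℤ := fun h => (dig p k h : ℤ) with hκ
  set ρ : ℕ → ZMod f → ℤ := numRho p N k with hρ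
  have hp' : (2 : ℤ) ≤ p := by exact_mod_cast hp
  have hκ0 : ∀ i, 0 ≤ κ i := fun _ => Int.natCast_nonneg _
  have hκp : ∀ i, κ i < p := fun i => Int.ofNat_lt.mpr (dig_lt hp k i)
  have hκk : ∑ i ∈ Finset.range N, κ i * (p : ℤ) ^ i = k := by
    simp only [hκ]; exact_mod_cast sum_dig hk
  set S : ℕ → ℕ → ℤ := fun j i => if j ≤ d then seg κ (cumType p ρ w j) i else κ i with hS
  have hSmono : ∀ j i, S j i ≤ S (j + 1) i := by
    intro j i
    simp only [hS]
    by_cases h1 : j + 1 ≤ d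
    · rw [if_pos h1, if_pos (by omega)]
      exact seg_mono (cumType_mono hv (by omega) h1) i
    · rw [if_neg h1]
      split_ifs
      · exact seg_le hκ0 _ i
      · exact le_rfl
  have hS0 : ∀ i, S 0 i = 0 := by
    intro i
    have := digitCount_nonneg hκ0 i (i : ZMod f)
    simp only [hS, Nat.zero_le, if_true, seg, cumType, Finset.range_zero, Finset.sum_empty]
    omega
  have hSnn : ∀ j i, 0 ≤ S j i := by
    intro j i
    simp only [hS]
    split_ifs
    · exact seg_nonneg _ _ _
    · exact hκ0 i
  have hSlt : ∀ j i, S j i < p := by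
    intro j i
    simp only [hS]
    split_ifs
    · exact (seg_le hκ0 _ i).trans_lt (hκp i)
    · exact hκp i
  set t : ℕ → ℕ → ℕ := fun b i => (S (b + 1) i - S b i).toNat with ht
  have htc : ∀ b i, (t b i : ℤ) = S (b + 1) i - S b i := fun b i =>
    Int.toNat_of_nonneg (by linarith [hSmono b i])
  have htp : ∀ b i, t b i < p := by
    intro b i
    have := htc b i
    have := hSnn b i
    have := hSlt (b + 1) i
    omega
  have htsum : ∀ j i, ∑ b ∈ Finset.range j, (t b i : ℤ) = S j i := by
    intro j i
    simp only [htc]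
    rw [Finset.sum_range_sub (fun b => S b i), hS0, sub_zero]
  set m : ℕ → ℕ := fun b => ∑ i ∈ Finset.range N, t b i * p ^ i with hm
  have hmsum : ∀ j, ((∑ b ∈ Finset.range j, m b : ℕ) : ℤ) =
      ∑ i ∈ Finset.range N, S j i * (p : ℤ) ^ i := by
    intro j
    simp only [hm]
    push_cast
    rw [Finset.sum_comm]
    refine Finset.sum_congr rfl fun i _ => ?_
    rw [← Finset.sum_mul, htsum]
  have hcut : ∀ j ≤ d, ((∑ b ∈ Finset.range j, m b : ℕ) : ℤ) =
      segVal p κ N (cumType p ρ w j) := by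
    intro j hj
    rw [hmsum]
    simp only [hS, if_pos hj, segVal]
  have htot : ((∑ b ∈ Finset.range (d + 1), m b : ℕ) : ℤ) = k := by
    rw [hmsum, ← hκk]
    simp [hS]
  refine ⟨m, ⟨by exact_mod_cast htot, ?_, ?_⟩, hcut⟩
  · intro h
    simp only [hm, dig_sum_pow hp (htp _)]
    by_cases hN : h < N
    · simp only [if_pos hN]
      have h1 := htsum (d + 1) h
      have h2 : S (d + 1) h = κ h := by simp [hS]
      rw [h2] at h1
      simp only [hκ] at h1
      exact_mod_cast h1
    · simp only [if_neg hN, Finset.sum_const_zero]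
      exact (dig_eq_zero (hk.trans_le (Nat.pow_le_pow_right (by omega) (by omega)))).symm
  · intro b hb1 hbd
    have hstep : (m b : ℤ) = ((∑ b ∈ Finset.range (b + 1), m b : ℕ) : ℤ) -
        ((∑ b ∈ Finset.range b, m b : ℕ) : ℤ) := by
      rw [Finset.sum_range_succ]; push_cast; ring
    have hdvd : ∀ j, 1 ≤ j → j ≤ d + 1 → ((∑ b ∈ Finset.range j, m b : ℕ) : ℤ) ≡ k
        [ZMOD ((p : ℤ) ^ f - 1)] := by
      intro j h1 h2
      by_cases h : j ≤ d
      · rw [hcut j h]; exact segVal_modEq hk hv hK h1 h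
      · obtain rfl : j = d + 1 := by omega
        rw [htot]
    refine ⟨?_, ?_⟩
    · by_cases h : b = d
      · subst h
        rw [htot, hcut b le_rfl] at hstep
        omega
      · by_contra h0
        have h0 : m b = 0 := by omega
        have ht0 : ∀ i < N, t b i = 0 := by
          intro i hi
          have := Finset.sum_eq_zero_iff.mp h0 i (Finset.mem_range.mpr hi)
          rcases Nat.mul_eq_zero.mp this with h | h
          · exact h
          · exact absurd h (by positivity)
        have hX : ∀ l, binType p (ρ b) (w b) l = 0 := by
          intro l
          have h1 : cumType p ρ w (b + 1) l = cumType p ρ w b l + binType p (ρ b) (w b) l :=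
            Finset.sum_range_succ _ _
          have h2 : ∀ j ≤ d, digitCount (seg κ (cumType p ρ w j)) N l = cumType p ρ w j l := by
            intro j hj
            rw [digitCount_seg hκ0 (cumType_nonneg hv hj),
              min_eq_left ((cumType_mono hv hj le_rfl l).trans (hK l))]
          have h3 : digitCount (seg κ (cumType p ρ w (b + 1))) N l =
              digitCount (seg κ (cumType p ρ w b)) N l := by
            refine Finset.sum_congr rfl fun i hi => ?_
            have h4 := htc b i
            rw [ht0 i (Finset.mem_range.mp hi)] at h4
            simp only [hS, if_pos hbd, if_pos (show b + 1 ≤ d by omega)] at h4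
            rw [show seg κ (cumType p ρ w (b + 1)) i = seg κ (cumType p ρ w b) i by
              push_cast at h4; linarith]
          rw [h2 _ (by omega), h2 _ hbd] at h3
          linarith
        have hsh : ∑ l, w b (l + 1) = ∑ l, w b l :=
          Equiv.sum_comp (Equiv.addRight (1 : ZMod f)) (w b)
        have h5 : ∑ l, binType p (ρ b) (w b) l =
            ∑ l : ZMod f, ((p : ℤ) - 1) + (p - 1) * ∑ l, w b l := by
          simp only [binType, Finset.sum_sub_distrib, Finset.sum_add_distrib, ← Finset.mul_sum,
            hsh, hρ, numRho_succ hb1]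
          ring
        rw [Finset.sum_eq_zero fun l _ => hX l] at h5
        have h6 : 0 < ∑ l : ZMod f, ((p : ℤ) - 1) :=
          Finset.sum_pos (fun l _ => by linarith) ⟨0, by simp⟩
        have h7 : 0 ≤ ∑ l, w b l := Finset.sum_nonneg fun l _ => (hv b (by omega) l).1
        have := mul_nonneg (show 0 ≤ (p : ℤ) - 1 by linarith) h7
        linarith
    · rw [← Int.natCast_dvd_natCast, q_cast hp, hstep]
      exact ((hdvd b hb1 (by omega)).trans (hdvd (b + 1) (by omega) (by omega)).symm).dvd

end

end ModestWeight

/-! ### Weight-minimal tuples are modest -/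

namespace ModestWeight

theorem IsU.restrict {p q d k : ℕ} (hp : 2 ≤ p) {m : ℕ → ℕ} (hm : IsU p q (d + 1) k m) :
    IsU p q d (∑ b ∈ Finset.range (d + 1), m b) m := by
  refine ⟨rfl, fun h => ?_, fun b h1 h2 => hm.2.2 b h1 (by omega)⟩
  have hk : k < p ^ (k + h + 1) :=
    (Nat.lt_pow_self (by omega)).trans_le (Nat.pow_le_pow_right (by omega) (by omega))
  rw [← hm.sum_eq hk (j := d + 1) (by omega), dig_sum_pow hp, if_pos (by omega)]
  intro i
  exact (hm.dig_le (by omega) i).trans_lt (dig_lt hp k i)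

theorem IsU.extend {p q d k : ℕ} (hp : 2 ≤ p) {m m' : ℕ → ℕ} (hm : IsU p q (d + 1) k m)
    (hm' : IsU p q d (∑ b ∈ Finset.range (d + 1), m b) m') :
    IsU p q (d + 1) k (Function.update m' (d + 1) (m (d + 1))) := by
  have hlt : ∀ b ∈ Finset.range (d + 1), Function.update m' (d + 1) (m (d + 1)) b = m' b := by
    intro b hb
    rw [Function.update_of_ne (by have := Finset.mem_range.mp hb; omega)]
  refine ⟨?_, fun h => ?_, fun b h1 h2 => ?_⟩
  · rw [Finset.sum_range_succ, Finset.sum_congr rfl hlt, hm'.1, Function.update_self,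
      ← Finset.sum_range_succ, hm.1]
  · rw [Finset.sum_range_succ, Finset.sum_congr rfl fun b hb => by rw [hlt b hb], hm'.2.1,
      Function.update_self, ← (hm.restrict hp).2.1, ← Finset.sum_range_succ, hm.2.1]
  · by_cases hb : b = d + 1
    · subst hb; rw [Function.update_self]; exact hm.2.2 _ h1 h2
    · rw [Function.update_of_ne hb]; exact hm'.2.2 b h1 (by omega)

theorem cutSum_succ (d : ℕ) (m : ℕ → ℕ) :
    cutSum (d + 1) m = cutSum d m + ∑ b ∈ Finset.range (d + 1), m b :=
  Finset.sum_range_succ _ _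

theorem cutSum_congr {d : ℕ} {m m' : ℕ → ℕ} (h : ∀ b < d, m b = m' b) :
    cutSum d m = cutSum d m' := by
  refine Finset.sum_congr rfl fun j hj => Finset.sum_congr rfl fun b hb => h b ?_
  have := Finset.mem_range.mp hj
  have := Finset.mem_range.mp hb
  omega

/-- Removing the last entry preserves minimality, because any competitor can be extended by it. -/
theorem IsMin.restrict {p q d k : ℕ} (hp : 2 ≤ p) {m : ℕ → ℕ} (hm : IsMin p q (d + 1) k m) :
    IsMin p q d (∑ b ∈ Finset.range (d + 1), m b) m := by
  refine ⟨hm.1.restrict hp, fun m' hm' => ?_⟩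
  have h1 := hm.2 _ (hm.1.extend hp hm')
  have hlt : ∀ b < d + 1, Function.update m' (d + 1) (m (d + 1)) b = m' b := by
    intro b hb
    rw [Function.update_of_ne (by omega)]
  rw [cutSum_succ, cutSum_succ, cutSum_congr fun b hb => hlt b (by omega),
    Finset.sum_congr rfl fun b hb => hlt b (Finset.mem_range.mp hb), hm'.1] at h1
  omega

section
variable {f : ℕ} [NeZero f]

/-- The types of a weight-minimal tuple form a family of minimal cost. -/
theorem IsMin.minCost {p d k N : ℕ} (hp : 2 ≤ p) {m : ℕ → ℕ} (hm : IsMin p (p ^ f) d k m)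
    (hk : k < p ^ N) :
    MinCost (f := f) p (fun h => (dig p k h : ℤ)) N (numRho p N k)
      (fun b => numW p N b (m b)) d := by
  refine ⟨hm.1.valid hp hk, fun l => hm.1.cumType_le hp hk (by omega) l, fun w' hv hK hlt => ?_⟩
  rcases Nat.eq_zero_or_pos d with rfl | hd
  · simp
  have h1 := hm.1.segVal_le hp hk (j := d) (by omega)
  have h2 : ∑ b ∈ Finset.range d, m b ≤ k := by
    have := hm.1.1
    rw [Finset.sum_range_succ] at this
    omega
  have h2' : ((∑ b ∈ Finset.range d, m b : ℕ) : ℤ) ≤ k := Int.ofNat_le.mpr h2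
  obtain ⟨m', hm', hcut⟩ := exists_isU_of_valid hp hk hd hv hK (by linarith)
  have h3 : ((cutSum d m : ℕ) : ℤ) ≤ cutSum d m' := Int.ofNat_le.mpr (hm.2 m' hm')
  have h4 : ((cutSum d m' : ℕ) : ℤ) = ∑ j ∈ Finset.range d,
      segVal p (fun h => (dig p k h : ℤ)) N (cumType p (numRho p N k) w' (j + 1)) := by
    rw [cutSum, Nat.cast_sum]
    exact Finset.sum_congr rfl fun j hj => hcut _ (Finset.mem_range.mp hj)
  rw [← h4]
  refine le_trans ?_ h3
  rw [cutSum, Nat.cast_sum]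
  exact Finset.sum_le_sum fun j hj => hm.1.segVal_le hp hk
    (by have := Finset.mem_range.mp hj; omega)

theorem numRho_succ_le (p N k b : ℕ) (l : ZMod f) (hb : 1 ≤ b) :
    (p : ℤ) - 1 ≤ numRho p N k b l := (numRho_succ hb l).ge

theorem dig_le_sub_one {p : ℕ} (hp : 2 ≤ p) (k i : ℕ) : ((dig p k i : ℕ) : ℤ) ≤ p - 1 := by
  have := dig_lt hp k i
  omega

theorem IsMin.exists_zero {p d k N : ℕ} (hp : 2 ≤ p) {m : ℕ → ℕ} (hm : IsMin p (p ^ f) d k m)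
    (hk : k < p ^ N) : ∃ z : ZMod f, ∑ b ∈ Finset.range d, numW p N b (m b) z = 0 := by
  induction d generalizing k with
  | zero => exact ⟨0, by simp⟩
  | succ d ih =>
    have h1 : ∑ b ∈ Finset.range (d + 1), m b ≤ k := by
      have := hm.1.1
      rw [Finset.sum_range_succ] at this
      omega
    have hz := ih (hm.restrict hp) (by omega)
    exact (hm.minCost hp hk).exists_zero (by exact_mod_cast hp) (fun _ => Int.natCast_nonneg _)
      (dig_le_sub_one hp k) (numRho_nonneg hp N k) (numRho_succ_le p N k) hz

/-- A weight-minimal tuple has the smallest last cut, hence the largest last entry. Its cuts are the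
greedy ones, since the greedy tuple of the same types would otherwise weigh less. -/
theorem IsMin.sum_le {p d k : ℕ} (hp : 2 ≤ p) {m M : ℕ → ℕ} (hm : IsMin p (p ^ f) d k m)
    (hM : IsU p (p ^ f) d k M) (hd : 1 ≤ d) :
    ∑ b ∈ Finset.range d, m b ≤ ∑ b ∈ Finset.range d, M b := by
  have hk : k < p ^ k := Nat.lt_pow_self (by omega)
  have hlt : ∑ b ∈ Finset.range d, m b < k := by
    have := hm.1.1
    have := (hm.1.2.2 d hd le_rfl).1
    rw [Finset.sum_range_succ] at *
    omega
  have h1 := hm.1.segVal_le hp hk (j := d) (by omega)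
  have hlt' : ((∑ b ∈ Finset.range d, m b : ℕ) : ℤ) < k := Int.ofNat_lt.mpr hlt
  obtain ⟨m', hm', hcut⟩ := exists_isU_of_valid hp hk hd (hm.1.valid hp hk)
    (fun l => hm.1.cumType_le hp hk (by omega) l) (by linarith)
  have hle : ∀ j ∈ Finset.range d, ∑ b ∈ Finset.range (j + 1), m' b ≤
      ∑ b ∈ Finset.range (j + 1), m b := by
    intro j hj
    have hj' := Finset.mem_range.mp hj
    have h2 := hm.1.segVal_le hp hk (j := j + 1) (by omega)
    rw [← hcut (j + 1) hj'] at h2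
    exact Int.ofNat_le.mp h2
  have hEq := (Finset.sum_eq_sum_iff_of_le hle).mp
    (le_antisymm (Finset.sum_le_sum hle) (hm.2 m' hm')) (d - 1) (Finset.mem_range.mpr (by omega))
  rw [Nat.sub_add_cancel hd] at hEq
  have h3 := (hm.minCost hp hk).segVal_le (by exact_mod_cast hp)
    (fun _ => Int.natCast_nonneg _)
    (dig_le_sub_one hp k) (numRho_nonneg hp k k) (numRho_succ_le p k k) (hm.exists_zero hp hk)
    (hM.valid hp hk) (fun l => hM.cumType_le hp hk (by omega) l)
  rw [← hcut d le_rfl] at h3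
  have h4 := h3.trans (hM.segVal_le hp hk (j := d) (by omega))
  rw [← hEq]
  exact Int.ofNat_le.mp h4

/-- The reversal of a weight-minimal tuple is lexicographically at least that of any other tuple. -/
theorem IsMin.lex {p d k : ℕ} (hp : 2 ≤ p) {m M : ℕ → ℕ} (hm : IsMin p (p ^ f) d k m)
    (hM : IsU p (p ^ f) d k M) :
    (∀ b ≤ d, m b = M b) ∨ ∃ i ≤ d, (∀ j, i < j → j ≤ d → m j = M j) ∧ M i < m i := by
  induction d generalizing k with
  | zero =>
    left
    intro b hb
    obtain rfl : b = 0 := by omega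
    have h1 := hm.1.1
    have h2 := hM.1
    simp at h1 h2
    omega
  | succ d ih =>
    have h0 := hm.sum_le hp hM (by omega)
    have h1 := hm.1.1
    have h2 := hM.1
    rw [Finset.sum_range_succ] at h1 h2
    rcases h0.lt_or_eq with h | h
    · right
      exact ⟨d + 1, le_rfl, fun j h1 h2 => by omega, by omega⟩
    · have hM' := hM.restrict hp
      rw [← h] at hM'
      rcases ih (hm.restrict hp) hM' with h3 | ⟨i, hi, h3, h4⟩
      · left
        intro b hb
        by_cases hb' : b ≤ d
        · exact h3 b hb'
        · obtain rfl : b = d + 1 := by omega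
          omega
      · right
        refine ⟨i, by omega, fun j hj hj' => ?_, h4⟩
        by_cases hb' : j ≤ d
        · exact h3 j hj hb'
        · obtain rfl : j = d + 1 := by omega
          omega

end

end ModestWeight

/-! ### Comparison with `U_d(k)` -/

namespace ModestWeight

theorem getD_digits_eq_dig {p : ℕ} (hp : 2 ≤ p) (n j : ℕ) :
    (Nat.digits p n).getD j 0 = dig p n j := Nat.getD_digits n j hp

theorem mem_Uset_iff {p q d k : ℕ} (hp : 2 ≤ p) (m : ℕ → ℕ) :
    (fun i : Fin (d + 1) => m i) ∈ Uset p q d k ↔ IsU p q d k m := by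
  simp only [Uset, NoCarry, Set.mem_ofPred_eq, IsU, getD_digits_eq_dig hp]
  rw [and_assoc, Finset.sum_range]
  refine and_congr Iff.rfl (and_congr ?_ ?_)
  · refine forall_congr' fun h => ?_
    rw [Finset.sum_range]
  · exact ⟨fun h b h1 h2 => h ⟨b, by omega⟩ h1, fun h i hi => h i hi (by omega)⟩

theorem wt_eq_cutSum (d : ℕ) (m : ℕ → ℕ) : wt (fun i : Fin (d + 1) => m i) = cutSum d m := by
  have h : ∀ d, ∑ i ∈ Finset.range (d + 1), (d - i) * m i = cutSum d m := by
    intro d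
    induction d with
    | zero => simp [cutSum]
    | succ d ih =>
      rw [Finset.sum_range_succ, cutSum_succ, ← ih, ← Finset.sum_add_distrib]
      simp only [Nat.sub_self, zero_mul, add_zero]
      refine Finset.sum_congr rfl fun i hi => ?_
      have := Finset.mem_range.mp hi
      rw [show d + 1 - i = (d - i) + 1 by omega]
      ring
  rw [← h, Finset.sum_range]
  rfl

theorem exists_extension {d : ℕ} (m : Fin (d + 1) → ℕ) :
    ∃ m' : ℕ → ℕ, m = fun i : Fin (d + 1) => m' i :=
  ⟨fun b => if h : b < d + 1 then m ⟨b, h⟩ else 0, by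
    funext i
    have := i.isLt
    simp only [this, dif_pos]⟩

/-- A weight-minimal element exists and is modest; since the modest element is unique, it is the only
weight-minimal one. -/
theorem wt_lt_of_modest {p f d k : ℕ} (hp : 2 ≤ p) (hf : 0 < f) {M : Fin (d + 1) → ℕ}
    (hM : M ∈ Uset p (p ^ f) d k)
    (hmod : ∀ m ∈ Uset p (p ^ f) d k, toLex (m ∘ Fin.rev) ≤ toLex (M ∘ Fin.rev)) :
    ∀ m ∈ Uset p (p ^ f) d k, m ≠ M → wt M < wt m := by
  have : NeZero f := ⟨hf.ne'⟩
  have key : ∀ m ∈ Uset p (p ^ f) d k, (∀ m' ∈ Uset p (p ^ f) d k, wt m ≤ wt m') → m = M := by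
    intro m hm hmin
    obtain ⟨m, rfl⟩ := exists_extension m
    obtain ⟨M, rfl⟩ := exists_extension M
    have h1 : IsMin p (p ^ f) d k m := by
      refine ⟨(mem_Uset_iff hp m).mp hm, fun m' hm' => ?_⟩
      rw [← wt_eq_cutSum, ← wt_eq_cutSum]
      exact hmin _ ((mem_Uset_iff hp m').mpr hm')
    rcases h1.lex hp ((mem_Uset_iff hp M).mp hM) with h | ⟨i, hi, h2, h3⟩
    · funext b
      exact h b (by omega)
    · refine absurd (hmod _ hm) (not_le.mpr ?_)
      refine ⟨Fin.rev ⟨i, by omega⟩, fun j hj => ?_, ?_⟩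
      · refine (h2 _ ?_ ?_).symm
        · have := Fin.lt_def.mp (Fin.rev_lt_rev.mpr hj)
          simpa using this
        · have := (Fin.rev j).isLt
          omega
      · simpa using h3
  obtain ⟨m₀, hm₀, hmin⟩ := (measure (wt (d := d))).wf.has_min (Uset p (p ^ f) d k) ⟨M, hM⟩
  have hmin' : ∀ m' ∈ Uset p (p ^ f) d k, wt m₀ ≤ wt m' := fun m' hm' => not_lt.mp (hmin m' hm')
  obtain rfl := key m₀ hm₀ hmin'
  intro m hm hne
  refine lt_of_le_of_ne (hmin' m hm) fun h => hne (key m hm fun m' hm' => ?_)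
  rw [← h]
  exact hmin' m' hm'

end ModestWeight

/-! ### Coefficients of the power sum -/

namespace ModestWeight

/-- Lucas' theorem: the binomial coefficient is nonzero in characteristic `p` iff each digit of `j` is
at most the corresponding digit of `k`. -/
theorem choose_ne_zero_iff {p : ℕ} (hp : p.Prime) (F : Type) [Field F] [CharP F p] {k j : ℕ}
    (hj : j ≤ k) : ((k.choose j : ℕ) : F) ≠ 0 ↔ ∀ h, dig p j h ≤ dig p k h := by
  have : Fact p.Prime := ⟨hp⟩
  have hk : k < p ^ k := Nat.lt_pow_self hp.one_lt
  have h1 := Choose.choose_modEq_prod_range_choose (p := p) hk (hj.trans_lt hk)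
  rw [Ne, CharP.cast_eq_zero_iff F p, ← Int.natCast_dvd_natCast, ← Int.modEq_zero_iff_dvd]
  have h2 : ((k.choose j : ℕ) : ℤ) ≡ 0 [ZMOD p] ↔
      ((∏ i ∈ Finset.range k, (dig p k i).choose (dig p j i) : ℕ) : ℤ) ≡ 0 [ZMOD p] := by
    push_cast
    exact ⟨fun h => h1.symm.trans h, fun h => h1.trans h⟩
  rw [h2, Int.modEq_zero_iff_dvd, Int.natCast_dvd_natCast, hp.prime.dvd_finsetProd_iff]
  have h3 : ∀ i, p ∣ (dig p k i).choose (dig p j i) ↔ dig p k i < dig p j i := by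
    intro i
    constructor
    · intro h
      by_contra! hle
      have h4 := Nat.choose_mul_factorial_mul_factorial hle
      have h5 : p ∣ (dig p k i).factorial := by
        rw [← h4, mul_assoc]; exact h.mul_right _
      have := (hp.dvd_factorial).mp h5
      have := dig_lt hp.two_le k i
      omega
    · intro h
      rw [Nat.choose_eq_zero_of_lt h]
      exact dvd_zero p
  constructor
  · intro h i
    by_contra! hlt
    by_cases hi : i < k
    · exact h ⟨i, Finset.mem_range.mpr hi, (h3 i).mpr hlt⟩
    · rw [dig_eq_zero (hj.trans_lt (hk.trans_le (Nat.pow_le_pow_right hp.pos (by omega))))] at hlt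
      omega
  · rintro h ⟨i, -, hi⟩
    have := (h3 i).mp hi
    have := h i
    omega

theorem dig_sub {p : ℕ} (hp : 2 ≤ p) {k j : ℕ} (h : ∀ i, dig p j i ≤ dig p k i)
    (i : ℕ) : dig p (k - j) i = dig p k i - dig p j i := by
  set N := k + j + i + 1 with hN
  have hb : ∀ n ≤ N, n < p ^ N := fun n hn =>
    (hn.trans_lt (Nat.lt_pow_self (by omega)))
  have h1 := sum_dig (p := p) (hb k (by omega))
  have h2 := sum_dig (p := p) (hb j (by omega))
  have h3 : k - j = ∑ l ∈ Finset.range N, (dig p k l - dig p j l) * p ^ l := by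
    have h4 : ∑ l ∈ Finset.range N, (dig p k l - dig p j l) * p ^ l +
        ∑ l ∈ Finset.range N, dig p j l * p ^ l = ∑ l ∈ Finset.range N, dig p k l * p ^ l := by
      rw [← Finset.sum_add_distrib]
      refine Finset.sum_congr rfl fun l _ => ?_
      rw [← add_mul, Nat.sub_add_cancel (h l)]
    omega
  rw [h3, dig_sum_pow hp (fun l => (Nat.sub_le _ _).trans_lt (dig_lt hp k l)), if_pos (by omega)]

theorem monicPoly_cons {F : Type} [Field F] (d : ℕ) (θ : F) (c : Fin d → F) :
    monicPoly F (d + 1) (Fin.cons θ c) = X * monicPoly F d c + C θ := by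
  simp only [monicPoly, Fin.sum_univ_succ, Fin.cons_zero, Fin.cons_succ, Fin.val_zero,
    Fin.val_succ, pow_zero, mul_one, mul_add, Finset.mul_sum]
  rw [show ∑ i : Fin d, X * (C (c i) * X ^ (i : ℕ)) = ∑ i : Fin d, C (c i) * X ^ ((i : ℕ) + 1) from
    Finset.sum_congr rfl fun i _ => by ring]
  ring

section
variable {F : Type} [Field F] [Fintype F]

theorem sum_pow_eq (i : ℕ) : ∑ θ : F, θ ^ i =
    if 0 < i ∧ (Fintype.card F - 1) ∣ i then -1 else 0 := by
  rcases Nat.eq_zero_or_pos i with rfl | hi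
  · simp
  have h1 : ∑ θ : F, θ ^ i = ∑ x : Fˣ, (x ^ i : F) := by
    rw [← Fintype.sum_subset (s := Finset.univ.erase (0 : F)) (f := fun θ => θ ^ i) ?_]
    · symm
      refine Finset.sum_bij (fun x _ => (x : F)) (fun x _ => by simp) (fun x _ y _ h => Units.ext h)
        (fun θ hθ => ⟨Units.mk0 θ (by simpa using hθ), by simp, rfl⟩) (fun x _ => rfl)
    · intro θ hθ
      simp only [Finset.mem_erase, Finset.mem_univ, and_true]
      rintro rfl
      exact hθ (by simp [hi.ne'])
  rw [h1, FiniteField.sum_pow_units]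
  simp [hi]

/-- Write a monic polynomial of degree `d + 1` as `t * a + θ` and sum over `θ` first: the power sums
of a finite field leave only the exponents `k - j > 0` divisible by `q - 1`. -/
theorem powerSum_succ (d k : ℕ) : powerSum F (d + 1) k =
    ∑ j ∈ Finset.range k, if (Fintype.card F - 1) ∣ k - j then
      C (-((k.choose j : ℕ) : F)) * (powerSum F d j * X ^ j) else 0 := by
  have h1 : powerSum F (d + 1) k = ∑ c : Fin d → F, ∑ θ : F, (X * monicPoly F d c + C θ) ^ k := by
    rw [powerSum, ← (Fin.consEquiv (fun _ : Fin (d + 1) => F)).sum_comp, Fintype.sum_prod_type_right]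
    refine Finset.sum_congr rfl fun c _ => Finset.sum_congr rfl fun θ _ => ?_
    rw [← monicPoly_cons]
    rfl
  have h2 : ∀ c : Fin d → F, ∑ θ : F, (X * monicPoly F d c + C θ) ^ k =
      ∑ j ∈ Finset.range (k + 1), (X * monicPoly F d c) ^ j * C (∑ θ : F, θ ^ (k - j)) *
        ((k.choose j : ℕ) : F[X]) := by
    intro c
    simp only [add_pow]
    rw [Finset.sum_comm]
    refine Finset.sum_congr rfl fun j _ => ?_
    rw [map_sum, Finset.mul_sum, Finset.sum_mul]
    simp only [C_pow]
  rw [h1, Finset.sum_congr rfl fun c _ => h2 c, Finset.sum_comm, Finset.sum_range_succ]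
  simp only [sum_pow_eq]
  rw [Finset.sum_eq_zero (s := (Finset.univ : Finset (Fin d → F))) (fun c _ => by simp), add_zero]
  refine Finset.sum_congr rfl fun j hj => ?_
  have hj' : 0 < k - j := by have := Finset.mem_range.mp hj; omega
  simp only [hj', true_and]
  split_ifs
  · rw [powerSum, Finset.sum_mul, Finset.mul_sum]
    refine Finset.sum_congr rfl fun c _ => ?_
    rw [mul_pow]
    simp only [C_neg, C_1, map_natCast]
    ring
  · simp

theorem coeff_powerSum_succ (d k n : ℕ) : (powerSum F (d + 1) k).coeff n =
    ∑ j ∈ Finset.range k, if (Fintype.card F - 1) ∣ k - j ∧ j ≤ n then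
      -((k.choose j : ℕ) : F) * (powerSum F d j).coeff (n - j) else 0 := by
  rw [powerSum_succ, finsetSum_coeff]
  refine Finset.sum_congr rfl fun j _ => ?_
  by_cases h : (Fintype.card F - 1) ∣ k - j
  · simp only [h, if_true, true_and]
    rw [coeff_C_mul, coeff_mul_X_pow']
    split_ifs <;> simp
  · simp [h]

theorem powerSum_zero (k : ℕ) : powerSum F 0 k = 1 := by
  simp [powerSum, monicPoly]

/-- Appending `k - j` to an element of `U_d(j)` gives an element of `U_{d+1}(k)` when `j` is bounded
digitwise by `k`. -/
theorem isU_snoc {p q d k j : ℕ} (hp : 2 ≤ p) {m : ℕ → ℕ} (hjk : j < k) (hq : (q - 1) ∣ k - j)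
    (hdig : ∀ i, dig p j i ≤ dig p k i) (hm : IsU p q d j m) :
    IsU p q (d + 1) k (Function.update m (d + 1) (k - j)) ∧
      ∑ b ∈ Finset.range (d + 1), Function.update m (d + 1) (k - j) b = j ∧
      cutSum (d + 1) (Function.update m (d + 1) (k - j)) = cutSum d m + j := by
  have hlt : ∀ b < d + 1, Function.update m (d + 1) (k - j) b = m b := by
    intro b hb
    rw [Function.update_of_ne (by omega)]
  have hsum : ∑ b ∈ Finset.range (d + 1), Function.update m (d + 1) (k - j) b = j := by
    rw [Finset.sum_congr rfl fun b hb => hlt b (Finset.mem_range.mp hb), hm.1]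
  refine ⟨⟨?_, fun h => ?_, fun b h1 h2 => ?_⟩, hsum, ?_⟩
  · rw [Finset.sum_range_succ, hsum, Function.update_self]
    omega
  · rw [Finset.sum_range_succ, Function.update_self,
      Finset.sum_congr rfl fun b hb => by rw [hlt b (Finset.mem_range.mp hb)], hm.2.1,
      dig_sub hp hdig]
    have := hdig h
    omega
  · by_cases hb : b = d + 1
    · subst hb
      rw [Function.update_self]
      exact ⟨by omega, hq⟩
    · rw [hlt b (by omega)]
      exact hm.2.2 b h1 (by omega)
  · rw [cutSum_succ, hsum, cutSum_congr fun b hb => hlt b (by omega)]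

/-- Every exponent occurring in `S_d(-k)` is the weight of an element of `U_d(k)`. -/
theorem exists_isU_of_coeff_ne_zero {p : ℕ} (hp : p.Prime) [CharP F p] (d : ℕ) :
    ∀ k n, (powerSum F d k).coeff n ≠ 0 →
      ∃ m, IsU p (Fintype.card F) d k m ∧ cutSum d m = n := by
  induction d with
  | zero =>
    intro k n h
    rw [powerSum_zero, coeff_one] at h
    refine ⟨fun _ => k, ⟨by simp, by simp, fun b h1 h2 => by omega⟩, ?_⟩
    by_contra hn
    exact h (if_neg (by simp [cutSum] at hn; omega))
  | succ d ih =>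
    intro k n h
    rw [coeff_powerSum_succ] at h
    obtain ⟨j, hj, hne⟩ := Finset.exists_ne_zero_of_sum_ne_zero h
    split_ifs at hne with hc
    · have hjk := Finset.mem_range.mp hj
      obtain ⟨m, hm, hcut⟩ := ih j (n - j) (right_ne_zero_of_mul hne)
      have h1 := isU_snoc hp.two_le hjk hc.1 ((choose_ne_zero_iff hp F hjk.le).mp
        (neg_ne_zero.mp (left_ne_zero_of_mul hne))) hm
      exact ⟨_, h1.1, by rw [h1.2.2, hcut]; omega⟩
    · exact absurd rfl hne

/-- A weight attained by exactly one element of `U_d(k)` occurs as an exponent in `S_d(-k)`. -/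
theorem coeff_ne_zero_of_unique {p : ℕ} (hp : p.Prime) [CharP F p] (d : ℕ) :
    ∀ k n m, IsU p (Fintype.card F) d k m → cutSum d m = n →
      (∀ m', IsU p (Fintype.card F) d k m' → cutSum d m' = n → ∀ b ≤ d, m' b = m b) →
      (powerSum F d k).coeff n ≠ 0 := by
  induction d with
  | zero =>
    intro k n m hm hn _
    rw [powerSum_zero, ← hn]
    simp [cutSum]
  | succ d ih =>
    intro k n m hm hn huniq
    have hm' := hm.restrict hp.two_le
    set j := ∑ b ∈ Finset.range (d + 1), m b with hj
    have hsum := hm.1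
    rw [Finset.sum_range_succ, ← hj] at hsum
    have htop := hm.2.2 (d + 1) (by omega) le_rfl
    have hcut := cutSum_succ d m
    rw [← hj, hn] at hcut
    have hjk : j < k := by omega
    have hc : (Fintype.card F - 1) ∣ k - j ∧ j ≤ n :=
      ⟨by rw [show k - j = m (d + 1) by omega]; exact htop.2, by omega⟩
    rw [coeff_powerSum_succ, Finset.sum_eq_single j, if_pos hc]
    · refine mul_ne_zero (neg_ne_zero.mpr ((choose_ne_zero_iff hp F hjk.le).mpr fun i => ?_))
        (ih j (n - j) m hm' (by omega) fun m' h1 h2 b hb => ?_)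
      · rw [← hm'.2.1 i]
        exact hm.dig_le (by omega) i
      · have h3 := hm.extend hp.two_le h1
        have hlt : ∀ b < d + 1, Function.update m' (d + 1) (m (d + 1)) b = m' b := by
          intro b hb
          rw [Function.update_of_ne (by omega)]
        have h4 := huniq _ h3 (by
          rw [cutSum_succ, cutSum_congr fun b hb => hlt b (by omega),
            Finset.sum_congr rfl fun b hb => hlt b (Finset.mem_range.mp hb), h1.1]
          omega) b (by omega)
        rwa [hlt b (by omega)] at h4
    · intro i hi hne
      split_ifs with hci
      · by_contra h0
        have hik := Finset.mem_range.mp hi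
        obtain ⟨m', h1, h2⟩ := exists_isU_of_coeff_ne_zero hp d i (n - i)
          (right_ne_zero_of_mul h0)
        have h3 := isU_snoc hp.two_le hik hci.1 ((choose_ne_zero_iff hp F hik.le).mp
          (neg_ne_zero.mp (left_ne_zero_of_mul h0))) h1
        have h4 := huniq _ h3.1 (by rw [h3.2.2, h2]; omega)
        apply hne
        rw [← h3.2.1, hj]
        exact Finset.sum_congr rfl fun b hb => h4 b (Finset.mem_range.mp hb).le
      · rfl
    · intro h
      exact absurd (Finset.mem_range.mpr hjk) h

theorem natTrailingDegree_of_modest {p d k : ℕ} (hp : p.Prime) [CharP F p]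
    {M : Fin (d + 1) → ℕ} (hM : M ∈ Uset p (Fintype.card F) d k)
    (hlt : ∀ m ∈ Uset p (Fintype.card F) d k, m ≠ M → wt M < wt m) :
    (powerSum F d k).natTrailingDegree = wt M := by
  obtain ⟨M, rfl⟩ := exists_extension M
  have h1 : (powerSum F d k).coeff (cutSum d M) ≠ 0 := by
    refine coeff_ne_zero_of_unique hp d k _ M ((mem_Uset_iff hp.two_le M).mp hM) rfl
      fun m' hm' hcut b hb => ?_
    by_contra hne
    have := hlt _ ((mem_Uset_iff hp.two_le m').mpr hm')
      (fun h => hne (congrFun h ⟨b, by omega⟩))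
    rw [wt_eq_cutSum, wt_eq_cutSum] at this
    omega
  rw [wt_eq_cutSum]
  refine le_antisymm (natTrailingDegree_le_of_ne_zero h1) ?_
  refine le_natTrailingDegree (fun h => h1 (by rw [h, coeff_zero])) fun n hn => ?_
  by_contra hne
  obtain ⟨m, hm, rfl⟩ := exists_isU_of_coeff_ne_zero hp d k n hne
  by_cases h : (fun i : Fin (d + 1) => m i) = fun i : Fin (d + 1) => M i
  · rw [← wt_eq_cutSum, ← wt_eq_cutSum, h] at hn
    exact lt_irrefl _ hn
  · have := hlt _ ((mem_Uset_iff hp.two_le m).mpr hm) h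
    rw [wt_eq_cutSum, wt_eq_cutSum] at this
    omega

end

end ModestWeight

theorem stmt12 (p f q : ℕ) (hp : p.Prime) (hf : 0 < f) (hq : q = p ^ f)
    (F : Type) [Field F] [Fintype F] (hF : Fintype.card F = q)
    (d k : ℕ) (hk : 0 < k)
    (M : Fin (d + 1) → ℕ) (hM : M ∈ Uset p q d k)
    (hmod : ∀ m ∈ Uset p q d k, toLex (m ∘ Fin.rev) ≤ toLex (M ∘ Fin.rev)) :
    (∀ m ∈ Uset p q d k, m ≠ M → wt M < wt m) ∧
      (powerSum F d k).natTrailingDegree = wt M := by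
  have h1 : ∀ m ∈ Uset p q d k, m ≠ M → wt M < wt m := by
    subst hq
    exact ModestWeight.wt_lt_of_modest hp.two_le hf hM hmod
  refine ⟨h1, ?_⟩
  have : Fact p.Prime := ⟨hp⟩
  have : CharP F p := charP_of_card_eq_prime_pow (hF.trans hq)
  subst hF
  exact ModestWeight.natTrailingDegree_of_modest hp hM h1
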